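/- arXiv:1905.08470 — 3 statements merged into one kernel-verified Lean document; each statement's English description precedes it below -/
import Mathlib

section
/- Let p_1,...,p_s be odd primes and t_1,...,t_s positive integers, and set m = p_1^{2t_1}···p_s^{2t_s}. Let H be a group of order 4 (either Z_4 or Z_2 × Z_2) and let G_i be an elementary abelian group of order p_i^{4t_i} for each i. Then the group G = H × G_1 × ··· × G_s contains a Menon–Hadamard difference set, i.e., a subset D of G with |D| = 2m² − m such that every non-identity element g of G has exactly m² − m representations g = x − y with x, y ∈ D, x ≠ y. -/
noncomputable section

/-- `D` is a Menon–Hadamard difference set with parameter `m` in the additively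
written group `G`: `|D| = 2m² − m` and every non-identity `g` has exactly
`m² − m` representations `g = x − y` with `x, y ∈ D`, `x ≠ y`. -/
def IsMHDS {G : Type} [AddCommGroup G] (m : ℕ) (D : Set G) : Prop :=
  D.ncard = 2 * m ^ 2 - m ∧
    ∀ g : G, g ≠ 0 →
      {z : G × G | z.1 ∈ D ∧ z.2 ∈ D ∧ z.1 ≠ z.2 ∧ z.1 - z.2 = g}.ncard = m ^ 2 - m

/-- Periodic cross-correlation of two integer valued functions. -/
def corr {W : Type} [AddCommGroup W] [Fintype W] (f g : W → ℤ) (a : W) : ℤ :=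
  ∑ x, f (x + a) * g x

/-- The sign pattern `(+,+,+,-)`. -/
def eps : Fin 4 → ℤ := ![1, 1, 1, -1]

/-- A quadruple of `±1` functions from which Menon–Hadamard difference sets are built. -/
structure IsQuad {W : Type} [AddCommGroup W] [Fintype W] (m : ℕ) (f : Fin 4 → W → ℤ) : Prop where
  pm : ∀ i w, f i w = 1 ∨ f i w = -1
  sum : ∀ i, ∑ w, f i w = eps i * m
  cross : ∀ i j, i ≠ j → ∀ g, corr (f i) (f j) g = eps i * eps j
  auto_zero : ∑ i, corr (f i) (f i) 0 = 4 * (m : ℤ) ^ 2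
  auto_ne : ∀ g, g ≠ 0 → ∑ i, corr (f i) (f i) g = 0

theorem mhds_of_fun {X : Type} [AddCommGroup X] [Fintype X] (m : ℕ) (F : X → ℤ)
    (hF : ∀ x, F x = 1 ∨ F x = -1) (hs : ∑ x, F x = 2 * m)
    (h0 : corr F F 0 = 4 * (m : ℤ) ^ 2) (hne : ∀ g, g ≠ 0 → corr F F g = 0) :
    IsMHDS m {x | F x = -1} := by
  classical
  have hcard : (Fintype.card X : ℤ) = 4 * (m : ℤ) ^ 2 := by
    rw [← h0, corr]
    have : ∀ x, F (x + 0) * F x = 1 := by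
      intro x
      rw [add_zero]
      rcases hF x with h | h <;> rw [h] <;> norm_num
    rw [Finset.sum_congr rfl (fun x _ => this x)]
    simp
  have hm : m ≤ m ^ 2 := Nat.le_self_pow (by norm_num) m
  have hind : ∀ x, 2 * (if F x = -1 then (1 : ℤ) else 0) = 1 - F x := by
    intro x
    rcases hF x with h | h <;> rw [h] <;> norm_num
  refine ⟨?_, ?_⟩
  · rw [Set.ncard_eq_toFinset_card']
    have h1 : (({x | F x = -1} : Set X).toFinset.card : ℤ) = ∑ x, if F x = -1 then (1 : ℤ) else 0 := by
      simp
    have h2 : 2 * (({x | F x = -1} : Set X).toFinset.card : ℤ) = 4 * (m : ℤ) ^ 2 - 2 * m := by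
      rw [h1, Finset.mul_sum, Finset.sum_congr rfl (fun x _ => hind x), Finset.sum_sub_distrib, hs,
        ← hcard]
      simp
    zify [show m ≤ 2 * m ^ 2 by omega]
    linarith
  · intro g hg
    have hset : {z : X × X | z.1 ∈ {x | F x = -1} ∧ z.2 ∈ {x | F x = -1} ∧ z.1 ≠ z.2 ∧ z.1 - z.2 = g}
        = (fun x => (x + g, x)) '' {x | F (x + g) = -1 ∧ F x = -1} := by
      ext ⟨a, b⟩
      simp only [Set.mem_ofPred_eq, Set.mem_image, Prod.mk.injEq]
      constructor
      · rintro ⟨h1, h2, h3, h4⟩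
        refine ⟨b, ?_, ?_, rfl⟩
        · rw [← h4]; simpa using ⟨h1, h2⟩
        · rw [← h4]; simp
      · rintro ⟨x, ⟨h1, h2⟩, h3, h4⟩
        subst h3 h4
        refine ⟨h1, h2, ?_, by simp⟩
        simpa using hg
    rw [hset, Set.ncard_image_of_injective _ (fun a b h => (Prod.mk.inj h).2),
      Set.ncard_eq_toFinset_card']
    have h1 : (({x | F (x + g) = -1 ∧ F x = -1} : Set X).toFinset.card : ℤ)
        = ∑ x, (if F (x + g) = -1 then (1 : ℤ) else 0) * (if F x = -1 then (1 : ℤ) else 0) := by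
      simp [← ite_and, and_comm]
    have h2 : 4 * (({x | F (x + g) = -1 ∧ F x = -1} : Set X).toFinset.card : ℤ)
        = 4 * (m : ℤ) ^ 2 - 4 * m := by
      have h3 : ∀ x, 4 * ((if F (x + g) = -1 then (1 : ℤ) else 0) * (if F x = -1 then (1 : ℤ) else 0))
          = 1 - F (x + g) - F x + F (x + g) * F x := by
        intro x
        linear_combination (2 * (if F x = -1 then (1 : ℤ) else 0)) * hind (x + g)
          + (1 - F (x + g)) * hind x
      have h4 : ∑ x, F (x + g) = 2 * m := by
        rw [← hs]
        exact Equiv.sum_comp (Equiv.addRight g) F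
      have h5 := hne g hg
      rw [corr] at h5
      rw [h1, Finset.mul_sum, Finset.sum_congr rfl (fun x _ => h3 x), Finset.sum_add_distrib,
        Finset.sum_sub_distrib, Finset.sum_sub_distrib, hs, h4, h5, ← hcard]
      simp
      ring
    zify [hm]
    linarith

theorem mhds_of_quad {W : Type} [AddCommGroup W] [Fintype W] {m : ℕ} {f : Fin 4 → W → ℤ}
    (hf : IsQuad m f) (H : Type) [AddCommGroup H] [Fintype H] (hH : Fintype.card H = 4) :
    ∃ D : Set (H × W), IsMHDS m D := by
  classical
  obtain ⟨e⟩ : Nonempty (H ≃ Fin 4) := ⟨Fintype.equivFinOfCardEq hH⟩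
  have key : ∀ a g, corr (fun z : H × W => f (e z.1) z.2) (fun z : H × W => f (e z.1) z.2) (a, g)
      = ∑ h, corr (f (e (h + a))) (f (e h)) g := by
    intro a g
    simp only [corr, Fintype.sum_prod_type, Prod.fst_add, Prod.snd_add]
  have hauto : ∀ g, corr (fun z : H × W => f (e z.1) z.2) (fun z : H × W => f (e z.1) z.2) (0, g)
      = ∑ i, corr (f i) (f i) g := by
    intro g
    rw [key, ← Equiv.sum_comp e]
    simp
  refine ⟨_, mhds_of_fun m (fun z : H × W => f (e z.1) z.2) (fun z => hf.pm _ _) ?_ ?_ ?_⟩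
  · rw [Fintype.sum_prod_type]
    simp only [hf.sum]
    rw [Equiv.sum_comp e (fun i => eps i * (m : ℤ))]
    simp [Fin.sum_univ_four, eps]
    ring
  · exact (hauto 0).trans hf.auto_zero
  · rintro ⟨a, g⟩ hg
    by_cases ha : a = 0
    · subst ha
      rw [hauto]
      exact hf.auto_ne g (fun h => hg (by rw [h]; rfl))
    · rw [key]
      have : ∀ h, corr (f (e (h + a))) (f (e h)) g = eps (e (h + a)) * eps (e h) := by
        intro h
        apply hf.cross
        simpa using ha
      rw [Finset.sum_congr rfl (fun h _ => this h)]
      have he : ∀ i, eps i = 1 - 2 * (if i = 3 then 1 else 0) := by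
        intro i; fin_cases i <;> simp [eps]
      have he' : ∀ h, eps (e h) = 1 - 2 * (if h = e.symm 3 then 1 else 0) := by
        intro h; rw [he]; simp [Equiv.eq_symm_apply]
      have h2 : ∀ h, eps (e (h + a)) * eps (e h) = 1 - 2 * (if h = e.symm 3 then 1 else 0)
          - 2 * (if h = e.symm 3 - a then 1 else 0) := by
        intro h
        rw [he', he']
        by_cases h1 : h = e.symm 3
        · have : h + a ≠ e.symm 3 := by rw [h1]; simpa using ha
          have h3 : h ≠ e.symm 3 - a := by rw [ne_eq, eq_sub_iff_add_eq]; exact this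
          rw [if_neg this, if_neg h3]; ring
        · rw [if_neg h1]; simp [eq_sub_iff_add_eq]
      rw [Finset.sum_congr rfl (fun h _ => h2 h), Finset.sum_sub_distrib, Finset.sum_sub_distrib,
        ← Finset.mul_sum, ← Finset.mul_sum]
      simp [hH]

theorem IsQuad.transfer {W W' : Type} [AddCommGroup W] [Fintype W] [AddCommGroup W'] [Fintype W']
    {m : ℕ} {f : Fin 4 → W → ℤ} (hf : IsQuad m f) (e : W' ≃+ W) :
    IsQuad m (fun i w => f i (e w)) := by
  have hc : ∀ (a b : W → ℤ) g, corr (fun w => a (e w)) (fun w => b (e w)) g = corr a b (e g) := by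
    intro a b g
    simp only [corr, map_add]
    exact Equiv.sum_comp e.toEquiv (fun x => a (x + e g) * b x)
  refine ⟨fun i w => hf.pm _ _, fun i => ?_, fun i j h g => ?_, ?_, fun g hg => ?_⟩
  · rw [← hf.sum i]; exact Equiv.sum_comp e.toEquiv (f i)
  · rw [hc]; exact hf.cross i j h _
  · simp only [hc, map_zero]; exact hf.auto_zero
  · simp only [hc]; exact hf.auto_ne _ (by simpa using hg)

theorem quad_unit {W : Type} [AddCommGroup W] [Fintype W] [Unique W] :
    IsQuad 1 (fun i (_ : W) => eps i) := by
  refine ⟨fun i _ => ?_, fun i => ?_, fun i j _ g => ?_, ?_, fun g hg => ?_⟩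
  · fin_cases i <;> simp [eps]
  · simp
  · simp [corr]
  · simp [corr, Fin.sum_univ_four, eps]
  · exact absurd (Subsingleton.elim _ _) hg

/-- Turyn composition of two functions with a third and fourth one. -/
def mixf {W V : Type} (a b : W → ℤ) (c d : V → ℤ) : W × V → ℤ :=
  fun z => if a z.1 = b z.1 then a z.1 * c z.2 else a z.1 * d z.2

theorem corr_mixf {W V : Type} [AddCommGroup W] [Fintype W] [AddCommGroup V] [Fintype V]
    (a b a' b' : W → ℤ) (c d c' d' : V → ℤ)
    (ha : ∀ w, a w = 1 ∨ a w = -1) (hb : ∀ w, b w = 1 ∨ b w = -1)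
    (ha' : ∀ w, a' w = 1 ∨ a' w = -1) (hb' : ∀ w, b' w = 1 ∨ b' w = -1) (g : W) (k : V) :
    4 * corr (mixf a b c d) (mixf a' b' c' d') (g, k) =
      (corr a a' g + corr a b' g + corr b a' g + corr b b' g) * corr c c' k
      + (corr a a' g - corr a b' g + corr b a' g - corr b b' g) * corr c d' k
      + (corr a a' g + corr a b' g - corr b a' g - corr b b' g) * corr d c' k
      + (corr a a' g - corr a b' g - corr b a' g + corr b b' g) * corr d d' k := by
  have two : ∀ (a b : W → ℤ) (c d : V → ℤ), (∀ w, a w = 1 ∨ a w = -1) → (∀ w, b w = 1 ∨ b w = -1) →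
      ∀ w v, 2 * mixf a b c d (w, v) = (a w + b w) * c v + (a w - b w) * d v := by
    intro a b c d ha hb w v
    rcases ha w with h | h <;> rcases hb w with h' | h' <;> simp [mixf, h, h'] <;> ring
  have tens : ∀ (p q : W → ℤ) (r s : V → ℤ), corr p q g * corr r s k
      = ∑ x, ∑ y, (p (x + g) * q x) * (r (y + k) * s y) := by
    intro p q r s
    rw [corr, corr, Finset.sum_mul_sum]
  simp only [add_mul, sub_mul, tens]
  simp only [← Finset.sum_add_distrib, ← Finset.sum_sub_distrib]
  rw [corr, Finset.mul_sum, Fintype.sum_prod_type]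
  refine Finset.sum_congr rfl fun x _ => Finset.sum_congr rfl fun y _ => ?_
  have e1 := two a b c d ha hb (x + g) (y + k)
  have e2 := two a' b' c' d' ha' hb' x y
  rw [Prod.mk_add_mk]
  calc _ = (2 * mixf a b c d (x + g, y + k)) * (2 * mixf a' b' c' d' (x, y)) := by ring
    _ = _ := by rw [e1, e2]; ring

theorem sum_mixf {W V : Type} [AddCommGroup W] [Fintype W] [AddCommGroup V] [Fintype V]
    (a b : W → ℤ) (c d : V → ℤ)
    (ha : ∀ w, a w = 1 ∨ a w = -1) (hb : ∀ w, b w = 1 ∨ b w = -1) :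
    2 * ∑ z, mixf a b c d z =
      ((∑ w, a w) + ∑ w, b w) * (∑ v, c v) + ((∑ w, a w) - ∑ w, b w) * ∑ v, d v := by
  rw [← Finset.sum_add_distrib, ← Finset.sum_sub_distrib, Finset.sum_mul_sum, Finset.sum_mul_sum,
    ← Finset.sum_add_distrib, Finset.mul_sum, Fintype.sum_prod_type]
  refine Finset.sum_congr rfl fun w _ => ?_
  rw [← Finset.sum_add_distrib]
  refine Finset.sum_congr rfl fun v _ => ?_
  rcases ha w with h | h <;> rcases hb w with h' | h' <;> simp [mixf, h, h'] <;> ring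

theorem IsQuad.comp {W V : Type} [AddCommGroup W] [Fintype W] [AddCommGroup V] [Fintype V]
    {m n : ℕ} {f : Fin 4 → W → ℤ} {g : Fin 4 → V → ℤ} (hf : IsQuad m f) (hg : IsQuad n g) :
    IsQuad (m * n) ![mixf (f 0) (f 1) (g 0) (g 1), mixf (f 0) (f 1) (g 2) (g 3),
      mixf (f 2) (f 3) (g 0) (g 1), mixf (f 2) (f 3) (g 2) (g 3)] := by
  have pm : ∀ (a b : W → ℤ) (c d : V → ℤ), (∀ w, a w = 1 ∨ a w = -1) → (∀ w, c w = 1 ∨ c w = -1) →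
      (∀ w, d w = 1 ∨ d w = -1) → ∀ z, mixf a b c d z = 1 ∨ mixf a b c d z = -1 := by
    intro a b c d ha hc hd z
    unfold mixf
    split_ifs
    · rcases ha z.1 with h | h <;> rcases hc z.2 with h' | h' <;> simp [h, h']
    · rcases ha z.1 with h | h <;> rcases hd z.2 with h' | h' <;> simp [h, h']
  have C := fun i j i' j' k l k' l' x y => corr_mixf (f i) (f j) (f i') (f j') (g k) (g l) (g k') (g l')
    (hf.pm _) (hf.pm _) (hf.pm _) (hf.pm _) x y
  have S := fun i j k l => sum_mixf (f i) (f j) (g k) (g l) (hf.pm _) (hf.pm _)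
  have fc : ∀ i j, i ≠ j → ∀ x, corr (f i) (f j) x = eps i * eps j := hf.cross
  have gc : ∀ i j, i ≠ j → ∀ x, corr (g i) (g j) x = eps i * eps j := hg.cross
  have A : ∀ x y, 4 * (corr (mixf (f 0) (f 1) (g 0) (g 1)) (mixf (f 0) (f 1) (g 0) (g 1)) (x, y)
      + corr (mixf (f 0) (f 1) (g 2) (g 3)) (mixf (f 0) (f 1) (g 2) (g 3)) (x, y)
      + corr (mixf (f 2) (f 3) (g 0) (g 1)) (mixf (f 2) (f 3) (g 0) (g 1)) (x, y)
      + corr (mixf (f 2) (f 3) (g 2) (g 3)) (mixf (f 2) (f 3) (g 2) (g 3)) (x, y))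
      = (∑ i, corr (f i) (f i) x) * ∑ i, corr (g i) (g i) y := by
    intro x y
    rw [mul_add, mul_add, mul_add, C, C, C, C, Fin.sum_univ_four, Fin.sum_univ_four,
      fc 0 1 (by decide), fc 1 0 (by decide), fc 2 3 (by decide), fc 3 2 (by decide),
      gc 0 1 (by decide), gc 1 0 (by decide), gc 2 3 (by decide), gc 3 2 (by decide)]
    simp [eps]
    ring
  refine ⟨?_, ?_, ?_, ?_, ?_⟩
  · intro i z
    fin_cases i <;> exact pm _ _ _ _ (hf.pm _) (hg.pm _) (hg.pm _) z
  · intro i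
    have s0 := S 0 1 0 1
    have s1 := S 0 1 2 3
    have s2 := S 2 3 0 1
    have s3 := S 2 3 2 3
    simp only [hf.sum, hg.sum] at s0 s1 s2 s3
    fin_cases i <;> simp [eps] at s0 s1 s2 s3 ⊢ <;> linarith
  · have c := fun i j i' j' k l k' l' x y => C i j i' j' k l k' l' x y
    rintro i j hij ⟨x, y⟩
    fin_cases i <;> fin_cases j <;> first | exact absurd rfl hij | skip
    all_goals
      simp only [Fin.mk_zero, Fin.mk_one, Fin.reduceFinMk, Fin.zero_eta, Fin.isValue,
        Matrix.cons_val]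
      refine mul_left_cancel₀ (four_ne_zero : (4 : ℤ) ≠ 0) ?_
      rw [C]
      simp only [fc 0 1 (by decide), fc 1 0 (by decide), fc 2 3 (by decide), fc 3 2 (by decide),
        fc 0 2 (by decide), fc 2 0 (by decide), fc 0 3 (by decide), fc 3 0 (by decide),
        fc 1 2 (by decide), fc 2 1 (by decide), fc 1 3 (by decide), fc 3 1 (by decide),
        gc 0 1 (by decide), gc 1 0 (by decide), gc 2 3 (by decide), gc 3 2 (by decide),
        gc 0 2 (by decide), gc 2 0 (by decide), gc 0 3 (by decide), gc 3 0 (by decide),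
        gc 1 2 (by decide), gc 2 1 (by decide), gc 1 3 (by decide), gc 3 1 (by decide)]
      simp [eps]
      try ring
  · have a := A 0 0
    rw [hf.auto_zero, hg.auto_zero] at a
    rw [Fin.sum_univ_four]
    have : (0 : W × V) = (0, 0) := rfl
    simp only [Matrix.cons_val, this, Nat.cast_mul]
    linarith
  · rintro ⟨x, y⟩ hxy
    have a := A x y
    have h : (∑ i, corr (f i) (f i) x) * ∑ i, corr (g i) (g i) y = 0 := by
      by_cases hx : x = 0
      · have hy : y ≠ 0 := fun hy => hxy (by rw [hx, hy]; rfl)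
        rw [hg.auto_ne y hy, mul_zero]
      · rw [hf.auto_ne x hx, zero_mul]
    rw [h] at a
    rw [Fin.sum_univ_four]
    simp only [Matrix.cons_val]
    linarith

theorem quad_pi : ∀ (s : ℕ) (n : Fin s → ℕ) (G : Fin s → Type) [∀ i, AddCommGroup (G i)]
    [∀ i, Fintype (G i)], (∀ i, ∃ f : Fin 4 → G i → ℤ, IsQuad (n i) f) →
    ∃ f : Fin 4 → ((i : Fin s) → G i) → ℤ, IsQuad (∏ i, n i) f := by
  intro s
  induction s with
  | zero =>
    intro n G _ _ _
    exact ⟨_, by simpa using quad_unit⟩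
  | succ s ih =>
    intro n G _ _ h
    obtain ⟨f0, h0⟩ := h 0
    obtain ⟨f1, h1⟩ := ih (fun i => n i.succ) (fun i => G i.succ) (fun i => h i.succ)
    rw [Fin.prod_univ_succ]
    let e : ((i : Fin (s + 1)) → G i) ≃+ G 0 × ((i : Fin s) → G i.succ) :=
      { (Fin.consEquiv G).symm with map_add' := fun _ _ => rfl }
    exact ⟨_, (h0.comp h1).transfer e⟩

section Plane

variable {K : Type} [Field K] [Fintype K] [DecidableEq K]

/-- Determinant of a pair of vectors. -/
def dt (x y : K × K) : K := x.1 * y.2 - x.2 * y.1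

/-- Representatives of the projective line over `K`. -/
def rep : Option K → K × K
  | none => (0, 1)
  | some t => (1, t)

/-- The Paley conference matrix. -/
def cm (t t' : Option K) : ℤ := quadraticChar K (dt (rep t) (rep t'))

/-- Indicator of a line. -/
def lineInd (t : Option K) (g : K × K) : ℤ := if dt g (rep t) = 0 then 1 else 0

/-- A function supported on the line `t`. -/
def onLine (φ : K → ℤ) (t : Option K) (x : K × K) : ℤ := ∑ z, if x = z • rep t then φ z else 0

theorem dt_smul (z : K) (x y : K × K) : dt (z • x) y = z * dt x y := by
  simp [dt]; ring

theorem dt_rep (t t' : Option K) : dt (rep t) (rep t') = 0 ↔ t = t' := by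
  rcases t with _ | t <;> rcases t' with _ | t' <;> simp [dt, rep, sub_eq_zero, eq_comm]

theorem rep_ne (t : Option K) : rep t ≠ 0 := by
  rcases t with _ | t <;> simp [rep, Prod.ext_iff]

theorem exists_rep (g : K × K) : ∃ (t : Option K) (z : K), g = z • (rep t : K × K) := by
  obtain ⟨a, b⟩ := g
  by_cases ha : a = 0
  · exact ⟨none, b, by simp [rep, ha]⟩
  · exact ⟨some (b / a), a, by simp [rep]; field_simp⟩

theorem smul_rep_eq {t t' : Option K} {z z' : K} (hz : z ≠ 0) :
    z • (rep t : K × K) = z' • rep t' ↔ t' = t ∧ z' = z := by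
  constructor
  · intro h
    have h1 := congrArg (fun w => dt w (rep t')) h
    simp only [dt_smul] at h1
    have h2 : dt (rep t') (rep t') = 0 := (dt_rep t' t').2 rfl
    rw [h2, mul_zero] at h1
    have h3 := (dt_rep t t').1 ((mul_eq_zero.1 h1).resolve_left hz)
    subst h3
    exact ⟨rfl, (smul_left_injective K (rep_ne t) h).symm⟩
  · rintro ⟨rfl, rfl⟩; rfl

theorem dt_smul_rep (t t' : Option K) (z : K) :
    dt (z • (rep t : K × K)) (rep t') = 0 ↔ z = 0 ∨ t = t' := by
  rw [dt_smul, mul_eq_zero, dt_rep]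

theorem corr_onLine (φ ψ : K → ℤ) (t t' : Option K) (g : K × K) :
    corr (onLine φ t) (onLine ψ t') g
      = ∑ z, ∑ z', if z' • rep t' + g = z • rep t then φ z * ψ z' else 0 := by
  simp only [corr, onLine, Finset.sum_mul_sum]
  rw [Finset.sum_comm]
  refine Finset.sum_congr rfl fun z _ => ?_
  rw [Finset.sum_comm]
  refine Finset.sum_congr rfl fun z' _ => ?_
  rw [Finset.sum_eq_single (z' • rep t')]
  · by_cases h : z' • rep t' + g = z • rep t <;> simp [h]
  · intro b _ hb
    rw [if_neg hb, mul_zero]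
  · simp

theorem corr_onLine_ne (φ ψ : K → ℤ) {t t' : Option K} (h : t ≠ t') (g : K × K) :
    corr (onLine φ t) (onLine ψ t') g
      = φ (dt g (rep t') / dt (rep t) (rep t')) * ψ (dt g (rep t) / dt (rep t) (rep t')) := by
  have hd : dt (rep t) (rep t') ≠ 0 := fun h' => h ((dt_rep t t').1 h')
  rw [corr_onLine]
  have key : ∀ z z' : K, z' • rep t' + g = z • rep t ↔
      z = dt g (rep t') / dt (rep t) (rep t') ∧ z' = dt g (rep t) / dt (rep t) (rep t') := by
    intro z z'
    rw [eq_div_iff hd, eq_div_iff hd]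
    generalize rep t = u at *
    generalize rep t' = u' at *
    obtain ⟨u1, u2⟩ := u
    obtain ⟨v1, v2⟩ := u'
    obtain ⟨g1, g2⟩ := g
    simp only [dt, Prod.smul_mk, Prod.mk_add_mk, Prod.mk.injEq, smul_eq_mul] at hd ⊢
    constructor
    · rintro ⟨h1, h2⟩
      exact ⟨by linear_combination -v2 * h1 + v1 * h2, by linear_combination -u2 * h1 + u1 * h2⟩
    · rintro ⟨h1, h2⟩
      refine ⟨mul_left_cancel₀ hd ?_, mul_left_cancel₀ hd ?_⟩
      · linear_combination -u1 * h1 + v1 * h2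
      · linear_combination -u2 * h1 + v2 * h2
  simp only [key, ite_and]
  simp

theorem quadChar_corr (hK : ringChar K ≠ 2) (hm1 : quadraticChar K (-1) = 1) {a : K} (ha : a ≠ 0) :
    ∑ z, quadraticChar K (z + a) * quadraticChar K z = -1 := by
  have h := jacobiSum_nontrivial_inv (quadraticChar_ne_one hK)
  rw [MulChar.IsQuadratic.inv (quadraticChar_isQuadratic K), hm1, jacobiSum] at h
  rw [← h, ← Equiv.sum_comp (Equiv.mulLeft₀ (-a) (neg_ne_zero.2 ha))]
  refine Finset.sum_congr rfl fun x _ => ?_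
  have h1 : (Equiv.mulLeft₀ (-a) (neg_ne_zero.2 ha)) x + a = a * (1 - x) := by simp; ring
  have h2 : (Equiv.mulLeft₀ (-a) (neg_ne_zero.2 ha)) x = -1 * (a * x) := by simp
  have h3 := quadraticChar_sq_one ha
  rw [h1, h2, map_mul, map_mul, map_mul, hm1]
  linear_combination quadraticChar K (1 - x) * quadraticChar K x * h3

theorem corr_onLine_eq (hK : ringChar K ≠ 2) (hm1 : quadraticChar K (-1) = 1)
    (a b a' b' : ℤ) (t : Option K) (g : K × K) :
    corr (onLine (fun z => a + b * quadraticChar K z) t)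
      (onLine (fun z => a' + b' * quadraticChar K z) t) g
      = a * a' * Fintype.card K * lineInd t g
        + b * b' * ((if g = 0 then (Fintype.card K : ℤ) else 0) - lineInd t g) := by
  rw [corr_onLine]
  by_cases hg : dt g (rep t) = 0
  · obtain ⟨y, rfl⟩ : ∃ y : K, g = y • rep t := by
      obtain ⟨t', y, rfl⟩ := exists_rep g
      rcases (dt_smul_rep t' t y).1 hg with h | h
      · exact ⟨0, by simp [h]⟩
      · exact ⟨y, by rw [h]⟩
    have key : ∀ z z' : K, z' • rep t + y • rep t = z • rep t ↔ z = z' + y := by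
      intro z z'
      rw [← add_smul]
      exact ⟨fun h => (smul_left_injective K (rep_ne t) h).symm, fun h => by rw [h]⟩
    rw [Finset.sum_comm]
    simp only [key, Finset.sum_ite_eq', Finset.sum_ite_eq, Finset.mem_univ, if_true]
    have hexp : ∀ z : K, (a + b * quadraticChar K (z + y)) * (a' + b' * quadraticChar K z)
        = a * a' + a * b' * quadraticChar K z + a' * b * quadraticChar K (z + y)
          + b * b' * (quadraticChar K (z + y) * quadraticChar K z) := fun z => by ring
    have hs := quadraticChar_sum_zero hK
    have hs' : ∑ z, quadraticChar K (z + y) = 0 := by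
      rw [← hs]; exact Equiv.sum_comp (Equiv.addRight y) (quadraticChar K)
    have hexp' : ∑ z : K, (a + b * quadraticChar K (z + y)) * (a' + b' * quadraticChar K z)
        = Fintype.card K * (a * a') + a * b' * (∑ z : K, quadraticChar K z)
          + a' * b * (∑ z : K, quadraticChar K (z + y))
          + b * b' * ∑ z : K, quadraticChar K (z + y) * quadraticChar K z := by
      rw [Finset.sum_congr rfl (fun z _ => hexp z)]
      simp only [Finset.sum_add_distrib, Finset.mul_sum, Finset.sum_const, Finset.card_univ,
        nsmul_eq_mul]
    rw [hexp', hs, hs']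
    rw [lineInd, if_pos hg]
    have hy : y • (rep t : K × K) = 0 ↔ y = 0 := by
      rw [smul_eq_zero]; simp [rep_ne]
    simp only [hy]
    by_cases hy0 : y = 0
    · subst hy0
      have h1 : ∑ z : K, quadraticChar K (z + 0) * quadraticChar K z = Fintype.card K - 1 := by
        have : ∀ z : K, quadraticChar K (z + 0) * quadraticChar K z = 1 - if z = 0 then 1 else 0 := by
          intro z
          by_cases hz : z = 0
          · simp [hz]
          · rw [add_zero, if_neg hz, ← sq, quadraticChar_sq_one hz, sub_zero]
        rw [Finset.sum_congr rfl (fun z _ => this z), Finset.sum_sub_distrib]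
        simp
      rw [h1]; simp; ring
    · rw [quadChar_corr hK hm1 hy0, if_neg hy0]
      simp; ring
  · have hg0 : g ≠ 0 := by rintro rfl; simp [dt] at hg
    rw [lineInd, if_neg hg, if_neg hg0]
    have key : ∀ z z' : K, ¬ z' • rep t + g = z • rep t := by
      intro z z' h
      have h' : g = (z - z') • rep t := by rw [sub_smul, ← h]; simp
      exact hg (by rw [h', dt_smul, (dt_rep t t).2 rfl, mul_zero])
    simp [key]

/-- The functions attached to weights on the projective line. -/
def spf (a b : Option K → ℤ) (x : K × K) : ℤ :=
  ∑ t, onLine (fun z => a t + b t * quadraticChar K z) t x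

/-- Character transform of a weight. -/
def trf (b : Option K → ℤ) (g : K × K) : ℤ := ∑ t, b t * quadraticChar K (dt g (rep t))

theorem cm_comm (hm1 : quadraticChar K (-1) = 1) (t t' : Option K) : cm t t' = cm t' t := by
  have : dt (rep t) (rep t') = -1 * dt (rep t') (rep t) := by simp [dt]; ring
  rw [cm, this, map_mul, hm1, one_mul, cm]

theorem corr_sum_left {ι : Type} {W : Type} [AddCommGroup W] [Fintype W] (s : Finset ι)
    (F : ι → W → ℤ) (G : ι → W → ℤ) (g : W) :
    corr (fun x => ∑ i ∈ s, F i x) (fun x => ∑ i ∈ s, G i x) g = ∑ i ∈ s, ∑ j ∈ s, corr (F i) (G j) g := by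
  simp only [corr, Finset.sum_mul_sum]
  rw [Finset.sum_comm]
  refine Finset.sum_congr rfl fun i _ => ?_
  rw [Finset.sum_comm]

theorem corr_spf (hK : ringChar K ≠ 2) (hm1 : quadraticChar K (-1) = 1)
    (a b a' b' : Option K → ℤ) (g : K × K) :
    corr (spf a b) (spf a' b') g =
      (∑ t, a t) * (∑ t, a' t)
      + ∑ t, a t * quadraticChar K (dt g (rep t)) * (∑ t', cm t t' * b' t')
      + ∑ t, a' t * quadraticChar K (dt g (rep t)) * (∑ t', cm t t' * b t')
      + trf b g * trf b' g
      + ∑ t, a t * a' t * (Fintype.card K * lineInd t g - 1)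
      + ((if g = 0 then (Fintype.card K : ℤ) else 0) - 1) * ∑ t, b t * b' t := by
  have hterm : ∀ t t', corr (onLine (fun z => a t + b t * quadraticChar K z) t)
      (onLine (fun z => a' t' + b' t' * quadraticChar K z) t') g
      = a t * a' t' + a t * quadraticChar K (dt g (rep t)) * (cm t t' * b' t')
        + a' t' * quadraticChar K (dt g (rep t')) * (cm t' t * b t)
        + (b t * quadraticChar K (dt g (rep t))) * (b' t' * quadraticChar K (dt g (rep t')))
        + if t = t' then (a t * a' t' * (Fintype.card K * lineInd t g - 1)
            + ((if g = 0 then (Fintype.card K : ℤ) else 0) - 1) * (b t * b' t')) else 0 := by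
    intro t t'
    by_cases h : t = t'
    · subst h
      rw [corr_onLine_eq hK hm1, if_pos rfl]
      have h0 : cm t t = 0 := by rw [cm, (dt_rep t t).2 rfl]; simp
      have h1 : quadraticChar K (dt g (rep t)) * quadraticChar K (dt g (rep t)) = 1 - lineInd t g := by
        unfold lineInd
        by_cases hg : dt g (rep t) = 0
        · simp [hg]
        · rw [if_neg hg, ← sq, quadraticChar_sq_one hg, sub_zero]
      rw [h0]
      linear_combination (- b t * b' t) * h1
    · rw [corr_onLine_ne _ _ h, if_neg h]
      have hd : dt (rep t) (rep t') ≠ 0 := fun h' => h ((dt_rep t t').1 h')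
      have hc : cm t t' * cm t t' = 1 := by
        rw [← sq]; exact quadraticChar_sq_one hd
      have hdiv : ∀ y : K, quadraticChar K (y / dt (rep t) (rep t')) = quadraticChar K y * cm t t' := by
        intro y
        have : quadraticChar K y = quadraticChar K (y / dt (rep t) (rep t')) * cm t t' := by
          rw [cm, ← map_mul, div_mul_cancel₀ _ hd]
        rw [this, mul_assoc, hc, mul_one]
      rw [hdiv, hdiv, cm_comm hm1 t' t]
      linear_combination (b t * b' t' * quadraticChar K (dt g (rep t)) * quadraticChar K (dt g (rep t'))) * hc
  have e : corr (spf a b) (spf a' b') g = ∑ t, ∑ t', corr (onLine (fun z => a t + b t * quadraticChar K z) t)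
      (onLine (fun z => a' t' + b' t' * quadraticChar K z) t') g :=
    corr_sum_left _ _ _ _
  rw [e]
  simp only [hterm, Finset.sum_add_distrib, Finset.sum_ite_eq, Finset.mem_univ, if_true]
  rw [Finset.sum_mul_sum, trf, trf, Finset.sum_mul_sum]
  simp only [Finset.mul_sum]
  rw [Finset.sum_comm (f := fun x y => a' y * quadraticChar K (dt g (rep y)) * (cm y x * b x))]
  ring

theorem trf_smul (b : Option K → ℤ) (t : Option K) (z : K) :
    trf b (z • rep t) = quadraticChar K z * ∑ t', cm t t' * b t' := by
  rw [trf, Finset.mul_sum]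
  refine Finset.sum_congr rfl fun t' _ => ?_
  rw [dt_smul, map_mul, cm]; ring

theorem sum_lineInd (c : Option K → ℤ) (t : Option K) {z : K} (hz : z ≠ 0) :
    ∑ t', c t' * lineInd t' (z • rep t) = c t := by
  have : ∀ t', lineInd t' (z • rep t) = if t = t' then 1 else 0 := by
    intro t'
    simp only [lineInd, dt_smul_rep, hz, false_or]
  simp [this]

theorem sum_lineInd_zero (c : Option K → ℤ) :
    ∑ t', c t' * lineInd t' 0 = ∑ t', c t' := by
  have : ∀ t' : Option K, lineInd t' 0 = 1 := by
    intro t'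
    simp [lineInd, dt]
  simp [this]

theorem spf_smul (a b : Option K → ℤ) (t : Option K) {z : K} (hz : z ≠ 0) :
    spf a b (z • rep t) = a t + b t * quadraticChar K z := by
  simp only [spf, onLine, smul_rep_eq hz, ite_and]
  rw [Finset.sum_eq_single t]
  · simp
  · intro b _ hb; simp [hb]
  · simp

theorem spf_zero (a b : Option K → ℤ) : spf a b 0 = ∑ t, a t := by
  refine Finset.sum_congr rfl fun t _ => ?_
  rw [onLine, Finset.sum_eq_single 0]
  · simp
  · intro b _ hb
    rw [if_neg]
    rw [eq_comm, smul_eq_zero]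
    simp [hb, rep_ne]
  · simp

theorem sum_spf (hK : ringChar K ≠ 2) (a b : Option K → ℤ) :
    ∑ x, spf a b x = Fintype.card K * ∑ t, a t := by
  simp only [spf]
  rw [Finset.sum_comm, Finset.mul_sum]
  refine Finset.sum_congr rfl fun t _ => ?_
  simp only [onLine]
  rw [Finset.sum_comm]
  simp only [Finset.sum_ite_eq', Finset.sum_ite_eq, Finset.mem_univ, if_true]
  rw [Finset.sum_add_distrib, ← Finset.mul_sum, quadraticChar_sum_zero hK]
  simp

theorem quad_of_weights (hK : ringChar K ≠ 2) (hm1 : quadraticChar K (-1) = 1) (q : ℕ)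
    (hq : Fintype.card K = q ^ 2) (α β v w : Option K → ℤ)
    (hv : ∀ t, (v t = 1 ∨ v t = -1) ∧ w t = 0 ∧ (β t = 1 ∨ β t = -1) ∧ α t = 0 ∨
      v t = 0 ∧ (w t = 1 ∨ w t = -1) ∧ β t = 0 ∧ (α t = 1 ∨ α t = -1))
    (hα : ∑ t, α t = 1) (hβ : ∑ t, β t = 1)
    (hCv : ∀ t, ∑ t', cm t t' * v t' = q * w t)
    (hCw : ∀ t, ∑ t', cm t t' * w t' = q * v t)
    (hsv : 2 * ∑ t, v t * v t = q ^ 2 + 1) (hsw : 2 * ∑ t, w t * w t = q ^ 2 + 1) :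
    IsQuad (q ^ 2) ![spf α v, spf α (-v), spf β w, -spf β (-w)] := by
  have hqc : (Fintype.card K : ℤ) = q ^ 2 := by rw [hq]; push_cast; ring
  have hneg : ∀ (b : Option K → ℤ) t, ∑ t', cm t t' * (-b) t' = - ∑ t' : Option K, cm t t' * b t' := by
    intro b t; simp
  have tneg : ∀ (b : Option K → ℤ) g, trf (-b) g = - trf b g := by intro b g; simp [trf]
  have cneg1 : ∀ (f h : K × K → ℤ) g, corr (-f) h g = - corr f h g := by
    intro f h g; simp [corr]
  have cneg2 : ∀ (f h : K × K → ℤ) g, corr f (-h) g = - corr f h g := by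
    intro f h g; simp [corr]
  -- pointwise facts
  have p1 : ∀ t, α t * α t = w t * w t := by
    intro t; rcases hv t with ⟨_, h2, _, h4⟩ | ⟨_, h2 | h2, _, h4 | h4⟩ <;> simp [h2, h4]
  have p2 : ∀ t, β t * β t = v t * v t := by
    intro t; rcases hv t with ⟨h2 | h2, _, h4 | h4, _⟩ | ⟨h2, _, h4, _⟩ <;> simp [h2, h4]
  have p3 : ∀ t, v t * w t = 0 := by
    intro t; rcases hv t with ⟨_, h, _⟩ | ⟨h, _⟩ <;> simp [h]
  have p4 : ∀ t, α t * β t = 0 := by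
    intro t; rcases hv t with ⟨_, _, _, h⟩ | ⟨_, _, h, _⟩ <;> simp [h]
  have p5 : ∀ t, α t * v t = 0 := by
    intro t; rcases hv t with ⟨_, _, _, h⟩ | ⟨h, _, _, _⟩ <;> simp [h]
  have p6 : ∀ t, β t * w t = 0 := by
    intro t; rcases hv t with ⟨_, h, _⟩ | ⟨_, _, h, _⟩ <;> simp [h]
  have p7 : ∀ t, v t * v t + w t * w t = 1 := by
    intro t; rcases hv t with ⟨h | h, h', _⟩ | ⟨h, h' | h', _⟩ <;> simp [h, h']
  -- transforms
  have T1 : ∀ g, trf v g * trf w g = 0 := by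
    intro g
    obtain ⟨t, z, rfl⟩ := exists_rep g
    rw [trf_smul, trf_smul, hCv, hCw]
    linear_combination (quadraticChar K z * q) ^ 2 * p3 t
  have T2 : ∀ g, trf v g * trf v g = q ^ 2 * (∑ t, w t * w t * lineInd t g)
      - (if g = 0 then (q : ℤ) ^ 2 else 0) * ∑ t, w t * w t := by
    intro g
    obtain ⟨t, z, rfl⟩ := exists_rep g
    by_cases hz : z = 0
    · subst hz
      rw [trf_smul, zero_smul, sum_lineInd_zero, if_pos rfl]; simp
    · have hne : z • (rep t : K × K) ≠ 0 := by rw [ne_eq, smul_eq_zero]; simp [hz, rep_ne]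
      rw [trf_smul, hCv, sum_lineInd _ _ hz, if_neg hne]
      linear_combination (q : ℤ) ^ 2 * w t ^ 2 * quadraticChar_sq_one hz
  have T3 : ∀ g, trf w g * trf w g = q ^ 2 * (∑ t, v t * v t * lineInd t g)
      - (if g = 0 then (q : ℤ) ^ 2 else 0) * ∑ t, v t * v t := by
    intro g
    obtain ⟨t, z, rfl⟩ := exists_rep g
    by_cases hz : z = 0
    · subst hz
      rw [trf_smul, zero_smul, sum_lineInd_zero, if_pos rfl]; simp
    · have hne : z • (rep t : K × K) ≠ 0 := by rw [ne_eq, smul_eq_zero]; simp [hz, rep_ne]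
      rw [trf_smul, hCw, sum_lineInd _ _ hz, if_neg hne]
      linear_combination (q : ℤ) ^ 2 * v t ^ 2 * quadraticChar_sq_one hz
  have T4 : ∀ g, (∑ t, v t * v t * lineInd t g) + (∑ t, w t * w t * lineInd t g)
      = 1 + if g = 0 then (q : ℤ) ^ 2 else 0 := by
    intro g
    rw [← Finset.sum_add_distrib]
    have : ∀ t : Option K, v t * v t * lineInd t g + w t * w t * lineInd t g = 1 * lineInd t g := by
      intro t; rw [← add_mul, p7]
    rw [Finset.sum_congr rfl (fun t _ => this t)]
    obtain ⟨t, z, rfl⟩ := exists_rep g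
    by_cases hz : z = 0
    · subst hz
      rw [zero_smul, sum_lineInd_zero (fun _ => 1), if_pos rfl]; simp [hq]; ring
    · have hne : z • (rep t : K × K) ≠ 0 := by rw [ne_eq, smul_eq_zero]; simp [hz, rep_ne]
      rw [sum_lineInd (fun _ => 1) _ hz, if_neg hne, add_zero]
  have D1 : ∀ g, ∑ t, α t * α t * ((q : ℤ) ^ 2 * lineInd t g - 1)
      = q ^ 2 * (∑ t, w t * w t * lineInd t g) - ∑ t, w t * w t := by
    intro g
    rw [Finset.mul_sum, ← Finset.sum_sub_distrib]
    refine Finset.sum_congr rfl fun t _ => ?_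
    rw [p1]; ring
  have D2 : ∀ g, ∑ t, β t * β t * ((q : ℤ) ^ 2 * lineInd t g - 1)
      = q ^ 2 * (∑ t, v t * v t * lineInd t g) - ∑ t, v t * v t := by
    intro g
    rw [Finset.mul_sum, ← Finset.sum_sub_distrib]
    refine Finset.sum_congr rfl fun t _ => ?_
    rw [p2]; ring
  have D3 : ∀ g, ∑ t, α t * β t * ((q : ℤ) ^ 2 * lineInd t g - 1) = 0 := by
    intro g; simp [p4]
  have D4 : ∀ g, ∑ t, β t * α t * ((q : ℤ) ^ 2 * lineInd t g - 1) = 0 := by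
    intro g; simp [mul_comm (β _), p4]
  have M1 : ∀ g : K × K, ∑ t, α t * quadraticChar K (dt g (rep t)) * (∑ t', cm t t' * w t') = 0 := by
    intro g
    refine Finset.sum_eq_zero fun t _ => ?_
    rw [hCw]; linear_combination (quadraticChar K (dt g (rep t)) * q) * p5 t
  have M2 : ∀ g : K × K, ∑ t, β t * quadraticChar K (dt g (rep t)) * (∑ t', cm t t' * v t') = 0 := by
    intro g
    refine Finset.sum_eq_zero fun t _ => ?_
    rw [hCv]; linear_combination (quadraticChar K (dt g (rep t)) * q) * p6 t
  have B1 : ∑ t, v t * w t = 0 := by simp [p3]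
  have B2 : ∑ t, w t * v t = 0 := by simp [mul_comm (w _), p3]
  have nn : ∀ (b b' : Option K → ℤ), ∑ t, b t * (-b') t = - ∑ t, b t * b' t := by
    intro b b'; simp
  have nn' : ∀ (b b' : Option K → ℤ), ∑ t, (-b) t * b' t = - ∑ t, b t * b' t := by
    intro b b'; simp
  have T1' : ∀ g, trf w g * trf v g = 0 := fun g => by rw [mul_comm, T1]
  have AUTO : ∀ g, ∑ i, corr ((![spf α v, spf α (-v), spf β w, -spf β (-w)] : Fin 4 → K × K → ℤ) i)
      ((![spf α v, spf α (-v), spf β w, -spf β (-w)] : Fin 4 → K × K → ℤ) i) g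
      = if g = 0 then 4 * (q : ℤ) ^ 4 else 0 := by
    intro g
    rw [Fin.sum_univ_four]
    simp only [Matrix.cons_val]
    simp only [cneg1, cneg2, corr_spf hK hm1, nn, nn', tneg, hα, hβ, D1, D2, hqc, mul_neg,
      neg_mul, Finset.sum_neg_distrib, neg_neg]
    have e1 := T2 g
    have e2 := T3 g
    have e3 := T4 g
    split_ifs at e1 e2 e3 ⊢
    · linear_combination 2 * e1 + 2 * e2 + 4 * (q : ℤ) ^ 2 * e3 - 2 * hsv - 2 * hsw
    · linear_combination 2 * e1 + 2 * e2 + 4 * (q : ℤ) ^ 2 * e3 - 2 * hsv - 2 * hsw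
  refine ⟨?_, ?_, ?_, ?_, ?_⟩
  · have pmf : ∀ a b : Option K → ℤ, ∑ t, a t = 1 →
        (∀ t, (a t = 0 ∧ (b t = 1 ∨ b t = -1)) ∨ (b t = 0 ∧ (a t = 1 ∨ a t = -1))) →
        ∀ x, spf a b x = 1 ∨ spf a b x = -1 := by
      intro a b ha hab x
      obtain ⟨t, z, rfl⟩ := exists_rep x
      by_cases hz : z = 0
      · left; rw [hz, zero_smul, spf_zero, ha]
      · rw [spf_smul _ _ _ hz]
        rcases quadraticChar_dichotomy hz with h | h <;>
          rcases hab t with ⟨h1, h2 | h2⟩ | ⟨h1, h2 | h2⟩ <;> simp [h, h1, h2]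
    have q0 := pmf α v hα (fun t => by
      rcases hv t with ⟨h1, h2, h3, h4⟩ | ⟨h1, h2, h3, h4⟩
      · exact Or.inl ⟨h4, h1⟩
      · exact Or.inr ⟨h1, h4⟩)
    have q1 := pmf α (-v) hα (fun t => by
      rcases hv t with ⟨h1, h2, h3, h4⟩ | ⟨h1, h2, h3, h4⟩
      · exact Or.inl ⟨h4, by rcases h1 with h | h <;> simp [h]⟩
      · exact Or.inr ⟨by simp [h1], h4⟩)
    have q2 := pmf β w hβ (fun t => by
      rcases hv t with ⟨h1, h2, h3, h4⟩ | ⟨h1, h2, h3, h4⟩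
      · exact Or.inr ⟨h2, h3⟩
      · exact Or.inl ⟨h3, h2⟩)
    have q3 := pmf β (-w) hβ (fun t => by
      rcases hv t with ⟨h1, h2, h3, h4⟩ | ⟨h1, h2, h3, h4⟩
      · exact Or.inr ⟨by simp [h2], h3⟩
      · exact Or.inl ⟨h3, by rcases h2 with h | h <;> simp [h]⟩)
    intro i x
    fin_cases i
    · exact q0 x
    · exact q1 x
    · exact q2 x
    · rcases q3 x with h | h <;> simp [h]
  · intro i
    fin_cases i <;> simp [eps, sum_spf hK, hα, hβ, hq]
  · intro i j hij g
    have hvw : ∑ t, w t * w t = ∑ t, v t * v t := by linarith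
    have e1 := T2 g
    have e2 := T3 g
    have e3 := T4 g
    fin_cases i <;> fin_cases j <;> first | exact absurd rfl hij | skip
    all_goals
      simp only [Fin.mk_zero, Fin.mk_one, Fin.reduceFinMk, Fin.zero_eta, Fin.isValue,
        Matrix.cons_val, eps]
      simp only [cneg1, cneg2, corr_spf hK hm1, nn, nn', tneg, hα, hβ, D1, D2, D3, D4, M1, M2, B1,
        B2, hqc, neg_mul, mul_neg, Finset.sum_neg_distrib, neg_neg, T1, T1', e1, e2, hvw]
      ring
  · rw [AUTO, if_pos rfl]; push_cast; ring
  · intro g hg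
    rw [AUTO, if_neg hg]

end Plane

theorem exists_signs {T : Type} [DecidableEq T] (S : Finset T) (hS : Odd S.card) :
    ∃ σ : T → ℤ, (∀ t ∈ S, σ t = 1 ∨ σ t = -1) ∧ (∀ t, t ∉ S → σ t = 0) ∧ ∑ t ∈ S, σ t = 1 := by
  obtain ⟨k, hk⟩ := hS
  obtain ⟨A, hA, hAc⟩ := Finset.exists_subset_card_eq (s := S) (n := k) (by omega)
  refine ⟨fun t => if t ∈ S then (if t ∈ A then -1 else 1) else 0, ?_, ?_, ?_⟩
  · intro t ht
    by_cases h : t ∈ A <;> simp [ht, h]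
  · intro t ht; simp [ht]
  · rw [Finset.sum_congr rfl (g := fun t => 1 - 2 * (if t ∈ A then (1 : ℤ) else 0))]
    · rw [Finset.sum_sub_distrib, ← Finset.mul_sum, Finset.sum_ite_mem,
        Finset.inter_eq_right.2 hA]
      simp [hk, hAc]
    · intro t ht
      by_cases h : t ∈ A <;> simp [ht, h]

section Weights

variable {K : Type} [Field K] [Fintype K] [DecidableEq K]

theorem quad_of_xy (hK : ringChar K ≠ 2) (hm1 : quadraticChar K (-1) = 1) (q : ℕ) (hodd : Odd q)
    (hq : Fintype.card K = q ^ 2) (x y : Option K → ℤ)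
    (hx : ∀ t, x t = 1 ∨ x t = -1) (hy : ∀ t, y t = 1 ∨ y t = -1)
    (hCx : ∀ t, ∑ t', cm t t' * x t' = q * x t)
    (hCy : ∀ t, ∑ t', cm t t' * y t' = - (q * y t)) :
    ∃ f : Fin 4 → K × K → ℤ, IsQuad (q ^ 2) f := by
  have hq0 : (q : ℤ) ≠ 0 := by
    rcases hodd with ⟨k, rfl⟩; positivity
  have horth : ∑ t, x t * y t = 0 := by
    have h1 : ∑ t, (∑ t', cm t t' * x t') * y t = q * ∑ t, x t * y t := by
      rw [Finset.mul_sum]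
      exact Finset.sum_congr rfl fun t _ => by rw [hCx]; ring
    have h2 : ∑ t, x t * (∑ t', cm t t' * y t') = - (q * ∑ t, x t * y t) := by
      rw [Finset.mul_sum, ← Finset.sum_neg_distrib]
      exact Finset.sum_congr rfl fun t _ => by rw [hCy]; ring
    have h3 : ∑ t, (∑ t', cm t t' * x t') * y t = ∑ t, x t * (∑ t', cm t t' * y t') := by
      simp only [Finset.sum_mul, Finset.mul_sum]
      rw [Finset.sum_comm]
      refine Finset.sum_congr rfl fun t _ => Finset.sum_congr rfl fun t' _ => ?_
      rw [cm_comm hm1 t' t]; ring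
    have h4 : (q : ℤ) * ∑ t, x t * y t = 0 := by linarith
    exact (mul_eq_zero.1 h4).resolve_left hq0
  let v : Option K → ℤ := fun t => if x t = y t then x t else 0
  let w : Option K → ℤ := fun t => if x t = y t then 0 else x t
  have hv2 : ∀ t, 2 * v t = x t + y t := by
    intro t; simp only [v]
    rcases hx t with h | h <;> rcases hy t with h' | h' <;> simp [h, h']
  have hw2 : ∀ t, 2 * w t = x t - y t := by
    intro t; simp only [w]
    rcases hx t with h | h <;> rcases hy t with h' | h' <;> simp [h, h']
  have hvv : ∀ t, 2 * (v t * v t) = 1 + x t * y t := by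
    intro t; simp only [v]
    rcases hx t with h | h <;> rcases hy t with h' | h' <;> simp [h, h']
  have hww : ∀ t, 2 * (w t * w t) = 1 - x t * y t := by
    intro t; simp only [w]
    rcases hx t with h | h <;> rcases hy t with h' | h' <;> simp [h, h']
  have hcard : (Fintype.card (Option K) : ℤ) = q ^ 2 + 1 := by
    rw [Fintype.card_option, hq]; push_cast; ring
  have hsv : 2 * ∑ t, v t * v t = q ^ 2 + 1 := by
    rw [Finset.mul_sum, Finset.sum_congr rfl (fun t _ => hvv t), Finset.sum_add_distrib, horth,
      ← hcard]
    simp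
  have hsw : 2 * ∑ t, w t * w t = q ^ 2 + 1 := by
    rw [Finset.mul_sum, Finset.sum_congr rfl (fun t _ => hww t), Finset.sum_sub_distrib, horth,
      ← hcard]
    simp
  have hCv : ∀ t, ∑ t', cm t t' * v t' = q * w t := by
    intro t
    have : 2 * ∑ t', cm t t' * v t' = 2 * (q * w t) := by
      have e : ∀ t', 2 * (cm t t' * v t') = cm t t' * x t' + cm t t' * y t' := by
        intro t'; linear_combination cm t t' * hv2 t'
      rw [Finset.mul_sum, Finset.sum_congr rfl (fun t' _ => e t'), Finset.sum_add_distrib, hCx, hCy]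
      linear_combination (-(q : ℤ)) * hw2 t
    linarith
  have hCw : ∀ t, ∑ t', cm t t' * w t' = q * v t := by
    intro t
    have : 2 * ∑ t', cm t t' * w t' = 2 * (q * v t) := by
      have e : ∀ t', 2 * (cm t t' * w t') = cm t t' * x t' - cm t t' * y t' := by
        intro t'; linear_combination cm t t' * hw2 t'
      rw [Finset.mul_sum, Finset.sum_congr rfl (fun t' _ => e t'), Finset.sum_sub_distrib, hCx, hCy]
      linear_combination (-(q : ℤ)) * hv2 t
    linarith
  let S : Finset (Option K) := Finset.univ.filter fun t => x t = y t
  let S' : Finset (Option K) := Finset.univ.filter fun t => ¬ x t = y t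
  have oddof : ∀ c : ℕ, 2 * (c : ℤ) = q ^ 2 + 1 → Odd c := by
    intro c hc
    obtain ⟨k, rfl⟩ := hodd
    refine ⟨k ^ 2 + k, ?_⟩
    zify
    push_cast at hc
    linarith
  have hS : Odd S.card := by
    apply oddof
    rw [← hsv]
    congr 1
    simp only [S, Finset.card_filter]
    push_cast
    refine Finset.sum_congr rfl fun t _ => ?_
    simp only [v]
    rcases hx t with h | h <;> rcases hy t with h' | h' <;> simp [h, h']
  have hS' : Odd S'.card := by
    apply oddof
    rw [← hsw]
    congr 1
    simp only [S', Finset.card_filter]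
    push_cast
    refine Finset.sum_congr rfl fun t _ => ?_
    simp only [w]
    rcases hx t with h | h <;> rcases hy t with h' | h' <;> simp [h, h']
  obtain ⟨β, hβ1, hβ0, hβs⟩ := exists_signs S hS
  obtain ⟨α, hα1, hα0, hαs⟩ := exists_signs S' hS'
  refine ⟨_, quad_of_weights hK hm1 q hq α β v w ?_ ?_ ?_ hCv hCw hsv hsw⟩
  · intro t
    by_cases h : x t = y t
    · refine Or.inl ⟨?_, ?_, hβ1 t ?_, hα0 t ?_⟩
      · simpa [v, h] using hy t
      · simp [w, h]
      · simp [S, h]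
      · simp [S', h]
    · refine Or.inr ⟨?_, ?_, hβ0 t ?_, hα1 t ?_⟩
      · simp [v, h]
      · simpa [w, h] using hx t
      · simp [S, h]
      · simp [S', h]
  · rw [← hαs]
    exact (Finset.sum_subset (Finset.subset_univ S') (fun t _ ht => hα0 t ht)).symm
  · rw [← hβs]
    exact (Finset.sum_subset (Finset.subset_univ S) (fun t _ ht => hβ0 t ht)).symm

theorem quad_of_x0 (hK : ringChar K ≠ 2) (hm1 : quadraticChar K (-1) = 1) (q : ℕ) (hodd : Odd q)
    (hq : Fintype.card K = q ^ 2) (x0 : K → ℤ)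
    (hx : ∀ t, x0 t = 1 ∨ x0 t = -1)
    (h1 : ∀ t, ∑ t', quadraticChar K (t' - t) * x0 t' = q * x0 t - 1)
    (h2 : ∑ t, x0 t = q) :
    ∃ f : Fin 4 → K × K → ℤ, IsQuad (q ^ 2) f := by
  obtain ⟨e, he⟩ := quadraticChar_exists_neg_one hK
  have he0 : e ≠ 0 := by rintro rfl; simp at he
  have c1 : ∀ t : K, cm (some t) none = 1 := by intro t; simp [cm, dt, rep]
  have c2 : ∀ t : K, cm none (some t) = 1 := by intro t; simp [cm, dt, rep, hm1]
  have c3 : ∀ t t' : K, cm (some t) (some t') = quadraticChar K (t' - t) := by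
    intro t t'; simp [cm, dt, rep]
  have c4 : cm (none : Option K) none = 0 := by simp [cm, dt, rep]
  refine quad_of_xy hK hm1 q hodd hq (fun o => o.elim 1 x0) (fun o => o.elim (-1) fun t => x0 (e * t))
    ?_ ?_ ?_ ?_
  · intro t; cases t <;> simp [hx]
  · intro t; cases t <;> simp [hx]
  · intro t
    cases t with
    | none => simp [Fintype.sum_option, c2, c4, h2]
    | some t =>
      simp only [Fintype.sum_option, c1, c3, Option.elim, h1]
      ring
  · intro t
    cases t with
    | none =>
      simp only [Fintype.sum_option, c2, c4, Option.elim]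
      have := Equiv.sum_comp (Equiv.mulLeft₀ e he0) x0
      simp at this
      simp [this, h2]
    | some t =>
      simp only [Fintype.sum_option, c1, c3, Option.elim]
      have h3 := h1 (e * t)
      rw [← Equiv.sum_comp (Equiv.mulLeft₀ e he0)] at h3
      have h4 : ∀ t', quadraticChar K ((Equiv.mulLeft₀ e he0) t' - e * t) * x0 ((Equiv.mulLeft₀ e he0) t')
          = - (quadraticChar K (t' - t) * x0 (e * t')) := by
        intro t'
        have h5 : (Equiv.mulLeft₀ e he0) t' = e * t' := rfl
        rw [h5, ← mul_sub, map_mul, he]; ring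
      rw [Finset.sum_congr rfl (fun t' _ => h4 t'), Finset.sum_neg_distrib] at h3
      linear_combination -h3

end Weights

section Quadratic

variable {F : Type} [Field F] [Fintype F]

/-- A field of order `q²` together with the signs needed, inside a quadratic extension of `F`. -/
theorem quad_of_field (hF : ringChar F ≠ 2) :
    ∃ (K : Type) (_ : AddCommGroup K) (_ : Fintype K),
      Fintype.card K = Fintype.card F ^ 2 ∧
      (∀ n : ℕ, (n : F) = 0 → ∀ x : K, n • x = 0) ∧
      ∃ f : Fin 4 → K × K → ℤ, IsQuad (Fintype.card F ^ 2) f := by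
  classical
  obtain ⟨e, he⟩ := FiniteField.exists_nonsquare hF
  haveI : Fact (∀ r, r ^ 2 ≠ e + 0 * r) := ⟨fun r hr => he ⟨r, by rw [← sq, hr]; ring⟩⟩
  letI : Fintype (QuadraticAlgebra F e 0) := Fintype.ofEquiv _ (QuadraticAlgebra.equivProd e (0 : F)).symm
  have hcK : Fintype.card (QuadraticAlgebra F e 0) = Fintype.card F ^ 2 := by
    rw [Fintype.card_congr (QuadraticAlgebra.equivProd e (0 : F)), Fintype.card_prod, sq]
  have hoddF : Odd (Fintype.card F) := Nat.odd_iff.2 (FiniteField.odd_card_of_char_ne_two hF)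
  have hK : ringChar (QuadraticAlgebra F e 0) ≠ 2 := by
    rw [← Algebra.ringChar_eq F (QuadraticAlgebra F e 0)]; exact hF
  have hsq : ∀ c : F, c ≠ 0 → quadraticChar (QuadraticAlgebra F e 0) (algebraMap F (QuadraticAlgebra F e 0) c) = 1 := by
    intro c hc
    have hne : algebraMap F (QuadraticAlgebra F e 0) c ≠ 0 := by
      rw [ne_eq, map_eq_zero]; exact hc
    rw [quadraticChar_one_iff_isSquare hne]
    by_cases h : IsSquare c
    · exact h.map (algebraMap F (QuadraticAlgebra F e 0))
    · have he0 : e ≠ 0 := by rintro rfl; exact he ⟨0, by simp⟩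
      have h1 : quadraticChar F (e * c) = 1 := by
        rw [map_mul, quadraticChar_neg_one_iff_not_isSquare.2 he,
          quadraticChar_neg_one_iff_not_isSquare.2 h]; norm_num
      obtain ⟨d, hd⟩ := (quadraticChar_one_iff_isSquare (mul_ne_zero he0 hc)).1 h1
      refine ⟨⟨0, d / e⟩, ?_⟩
      ext
      · simp
        field_simp
        linear_combination hd
      · simp
  have hm1 : quadraticChar (QuadraticAlgebra F e 0) (-1) = 1 := by
    have := hsq (-1) (by simp)
    simpa using this
  have hsumprod : ∀ φ : (QuadraticAlgebra F e 0) → ℤ, ∑ z, φ z = ∑ c : F, ∑ r : F, φ ⟨r, c⟩ := by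
    intro φ
    rw [← Equiv.sum_comp (QuadraticAlgebra.equivProd e (0 : F)).symm, Fintype.sum_prod_type,
      Finset.sum_comm]
    rfl
  let N : F → ℤ := fun c => ∑ r : F, quadraticChar (QuadraticAlgebra F e 0) (⟨r, c⟩ : (QuadraticAlgebra F e 0))
  have hN0 : N 0 = Fintype.card F - 1 := by
    have : ∀ r : F, quadraticChar (QuadraticAlgebra F e 0) (⟨r, 0⟩ : (QuadraticAlgebra F e 0)) = 1 - if r = 0 then 1 else 0 := by
      intro r
      by_cases hr : r = 0
      · subst hr
        have : (⟨0, 0⟩ : (QuadraticAlgebra F e 0)) = 0 := rfl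
        simp [this]
      · rw [if_neg hr, sub_zero]; exact hsq r hr
    simp only [N]
    rw [Finset.sum_congr rfl (fun r _ => this r), Finset.sum_sub_distrib]
    simp
  have hN1 : ∀ c : F, c ≠ 0 → N c = N 1 := by
    intro c hc
    simp only [N]
    rw [← Equiv.sum_comp (Equiv.mulLeft₀ c hc)]
    refine Finset.sum_congr rfl fun r _ => ?_
    have : (⟨(Equiv.mulLeft₀ c hc) r, c⟩ : (QuadraticAlgebra F e 0)) = algebraMap F (QuadraticAlgebra F e 0) c * ⟨r, 1⟩ := by
      ext <;> simp
    rw [this, map_mul, hsq c hc, one_mul]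
  have hq1 : (Fintype.card F : ℤ) - 1 ≠ 0 := by
    have := Fintype.one_lt_card (α := F)
    omega
  have hN1' : N 1 = -1 := by
    have h0 := quadraticChar_sum_zero hK
    rw [hsumprod] at h0
    have h0' : ∑ c, N c = 0 := h0
    have h2 : ∀ c, N c = N 1 + if c = 0 then N 0 - N 1 else 0 := by
      intro c
      by_cases hc : c = 0
      · simp [hc]
      · simp [hc, hN1 c hc]
    rw [Finset.sum_congr rfl (fun c _ => h2 c), Finset.sum_add_distrib, hN0] at h0'
    simp at h0'
    have : ((Fintype.card F : ℤ) - 1) * (N 1 + 1) = 0 := by linear_combination h0'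
    have := (mul_eq_zero.1 this).resolve_left hq1
    linarith
  obtain ⟨σ, hσ1, -, hσs⟩ := exists_signs (Finset.univ : Finset F) (by simpa using hoddF)
  refine ⟨(QuadraticAlgebra F e 0), inferInstance, inferInstance, hcK, ?_, ?_⟩
  · intro n hn x
    ext
    · simp [hn]
    · simp [hn]
  · refine quad_of_x0 hK hm1 (Fintype.card F) hoddF hcK (fun t => σ t.im) (fun t => hσ1 _ (Finset.mem_univ _)) ?_ ?_
    · intro t
      rw [← Equiv.sum_comp (Equiv.addRight t)]
      simp only [Equiv.coe_addRight, add_sub_cancel_right]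
      rw [hsumprod]
      have h3 : ∀ c : F, ∑ r : F, quadraticChar (QuadraticAlgebra F e 0) (⟨r, c⟩ : (QuadraticAlgebra F e 0)) * σ ((⟨r, c⟩ + t : (QuadraticAlgebra F e 0)).im) = N c * σ (c + t.im) := by
        intro c
        simp only [N, Finset.sum_mul]
        rfl
      rw [Finset.sum_congr rfl (fun c _ => h3 c)]
      have h4 : ∀ c : F, N c * σ (c + t.im) = (if c = 0 then Fintype.card F * σ t.im else 0) - σ (c + t.im) := by
        intro c
        by_cases hc : c = 0
        · subst hc; simp [hN0]; ring
        · rw [hN1 c hc, hN1', if_neg hc]; ring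
      rw [Finset.sum_congr rfl (fun c _ => h4 c), Finset.sum_sub_distrib]
      have h5 : ∑ c, σ (c + t.im) = 1 := by
        rw [← hσs]; exact Equiv.sum_comp (Equiv.addRight t.im) σ
      rw [h5]; simp
    · rw [hsumprod]
      simp [hσs, ← Finset.mul_sum]

end Quadratic

theorem aux_equiv (p : ℕ) [Fact p.Prime] (V V' : Type) [AddCommGroup V] [AddCommGroup V'] [Fintype V]
    [Fintype V'] [Module (ZMod p) V] [Module (ZMod p) V']
    (h : Fintype.card V = Fintype.card V') : Nonempty (V ≃+ V') := by
  have h1 := Module.card_eq_pow_finrank (K := ZMod p) (V := V)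
  have h2 := Module.card_eq_pow_finrank (K := ZMod p) (V := V')
  rw [← h, h1, ZMod.card] at h2
  have h3 : Module.finrank (ZMod p) V = Module.finrank (ZMod p) V' :=
    Nat.pow_right_injective (Fact.out : p.Prime).two_le h2
  obtain ⟨e⟩ := FiniteDimensional.nonempty_linearEquiv_of_finrank_eq h3
  exact ⟨e.toAddEquiv⟩

theorem quad_elem (p t : ℕ) (hp : p.Prime) (hp2 : p ≠ 2) (ht : 0 < t) (G : Type) [AddCommGroup G]
    [Fintype G] (hc : Fintype.card G = p ^ (4 * t)) (hG : ∀ x : G, p • x = 0) :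
    ∃ f : Fin 4 → G → ℤ, IsQuad (p ^ (2 * t)) f := by
  haveI : Fact p.Prime := ⟨hp⟩
  letI : Fintype (GaloisField p t) := Fintype.ofFinite _
  have hcF : Fintype.card (GaloisField p t) = p ^ t := by
    rw [← Nat.card_eq_fintype_card, GaloisField.card p t ht.ne']
  have hrc : ringChar (GaloisField p t) ≠ 2 := by
    rw [ringChar.eq (GaloisField p t) p]; exact hp2
  obtain ⟨K, _, _, hcK, hz, f, hf⟩ := quad_of_field hrc
  have hpK : ∀ x : K, p • x = 0 := hz p (CharP.cast_eq_zero _ p)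
  letI : Module (ZMod p) G := AddCommGroup.zmodModule hG
  letI : Module (ZMod p) K := AddCommGroup.zmodModule hpK
  have hcc : Fintype.card (K × K) = Fintype.card G := by
    rw [Fintype.card_prod, hcK, hcF, hc]; ring
  obtain ⟨e⟩ := aux_equiv p G (K × K) hcc.symm
  have := hf.transfer e
  rw [hcF, ← pow_mul, mul_comm t 2] at this
  exact ⟨_, this⟩

/-- Chen's theorem: for odd primes `p₁, …, p_s` and positive integers `t₁, …, t_s`,
any group `H × G₁ × ⋯ × G_s`, with `H` of order 4 and `Gᵢ` elementary abelian of
order `pᵢ^{4tᵢ}`, contains a Menon–Hadamard difference set with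
`m = p₁^{2t₁} ⋯ p_s^{2t_s}`. -/
theorem chen_menon_hadamard
    (s : ℕ) (hs : 0 < s) (P : Fin s → ℕ) (t : Fin s → ℕ)
    (hP : ∀ i, (P i).Prime) (hPodd : ∀ i, P i ≠ 2) (ht : ∀ i, 0 < t i)
    (H : Type) [AddCommGroup H] [Fintype H] (hH : Fintype.card H = 4)
    (G : Fin s → Type) [∀ i, AddCommGroup (G i)] [∀ i, Fintype (G i)]
    (hGcard : ∀ i, Fintype.card (G i) = P i ^ (4 * t i))
    (hGelem : ∀ i (x : G i), P i • x = 0) :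
    ∃ D : Set (H × ((i : Fin s) → G i)), IsMHDS (∏ i, P i ^ (2 * t i)) D := by
  obtain ⟨f, hf⟩ := quad_pi s (fun i => P i ^ (2 * t i)) G
    (fun i => quad_elem (P i) (t i) (hP i) (hPodd i) (ht i) (G i) (hGcard i) (hGelem i))
  exact mhds_of_quad hf H hH

end
end

section
/- Let q be an odd prime power, say q = p^s with p an odd prime. Suppose L = {L_0, L_1, ..., L_{q²}} is a spread of PG(3,q), i.e., a collection of q²+1 lines (two-dimensional F_q-subspaces of the underlying 4-dimensional space, viewed as point sets) that are pairwise skew, and suppose there exist four pairwise disjoint projective sets S_0, S_1, S_2, S_3 of type Q in PG(3,q) such that S_0 ∪ S_2 equals the set of points covered by L_0, ..., L_{(q²−1)/2} and S_1 ∪ S_3 equals the set of points covered by L_{(q²+1)/2}, ..., L_{q²}. Then for H = Z_4 and for H = Z_2 × Z_2 there exists a Menon–Hadamard difference set in H × G, where G is the elementary abelian group of order q⁴, i.e., a subset D of H × G with |D| = 2q⁴ − q² such that every non-identity element has exactly q⁴ − q² representations as a difference of two distinct elements of D. -/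
noncomputable section

/-- A projective set of type Q in `PG(3,q)`: a set of points (1-dimensional
subspaces) of size `(q⁴−1)/(4(q−1))` meeting every hyperplane (3-dimensional
subspace) in `(q−1)²/4` or `(q+1)²/4` points. -/
def IsProjTypeQ (q : ℕ) (K V : Type) [Field K] [AddCommGroup V] [Module K V]
    (S : Set (Submodule K V)) : Prop :=
  (∀ P ∈ S, Module.finrank K P = 1) ∧
  S.ncard = (q ^ 4 - 1) / (4 * (q - 1)) ∧
  ∀ W : Submodule K V, Module.finrank K W = 3 →
    {P ∈ S | P ≤ W}.ncard = (q - 1) ^ 2 / 4 ∨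
    {P ∈ S | P ≤ W}.ncard = (q + 1) ^ 2 / 4

lemma isMHDS_image {G G' : Type} [AddCommGroup G] [AddCommGroup G'] (m : ℕ) (D : Set G)
    (e : G ≃+ G') (h : IsMHDS m D) : IsMHDS m (e '' D) := by
  refine ⟨?_, ?_⟩
  · rw [Set.ncard_image_of_injective _ e.injective]; exact h.1
  · intro g hg
    rw [← h.2 (e.symm g) (by simpa using hg)]
    rw [← Set.ncard_image_of_injective _ (e.toEquiv.prodCongr e.toEquiv).injective]
    congr 1
    ext ⟨x, y⟩
    simp only [Set.mem_ofPred_eq, Set.mem_image, Prod.exists]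
    constructor
    · rintro ⟨⟨a, ha, rfl⟩, ⟨b, hb, rfl⟩, hne, hab⟩
      refine ⟨a, b, ⟨ha, hb, fun h => hne (by rw [h]), ?_⟩, rfl⟩
      rw [← hab]; simp
    · rintro ⟨a, b, ⟨ha, hb, hne, hab⟩, hxy⟩
      simp at hxy
      obtain ⟨rfl, rfl⟩ := hxy
      refine ⟨⟨a, ha, rfl⟩, ⟨b, hb, rfl⟩, fun h => hne (e.injective h), ?_⟩
      rw [← map_sub, hab]; simp

open ComplexConjugate in
lemma mhds_of_chars {H V : Type} [AddCommGroup H] [Fintype H] [DecidableEq H]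
    [AddCommGroup V] [Fintype V] [DecidableEq V]
    (m : ℕ) (hH : Fintype.card H = 4) (hV : Fintype.card V = m ^ 2) (hm : 0 < m)
    (D : H → Finset V) (k0 : H)
    (hcard : ∀ k, 2 * (D k).card + m = m ^ 2 + if k = k0 then 2 * m else 0)
    (hchar : ∀ χ : AddChar V ℂ, χ ≠ 0 → ∃ k1, (∀ k, k ≠ k1 → ∑ x ∈ D k, χ x = 0) ∧
      ((∑ x ∈ D k1, χ x = m) ∨ (∑ x ∈ D k1, χ x = -m))) :
    IsMHDS m {z : H × V | z.2 ∈ D z.1} := by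
  classical
  have hm2 : m ≤ m ^ 2 := Nat.le_self_pow (by norm_num) m
  refine ⟨?_, ?_⟩
  · have : {z : H × V | z.2 ∈ D z.1} = ((Finset.univ.sigma D).map
      (Equiv.sigmaEquivProd H V).toEmbedding : Finset (H × V)) := by
      ext ⟨h, v⟩; simp
    rw [this, Set.ncard_coe_finset, Finset.card_map, Finset.card_sigma]
    have h2 : ∑ k, (2 * (D k).card + m) = ∑ k : H, (m ^ 2 + if k = k0 then 2 * m else 0) :=
      Finset.sum_congr rfl fun k _ => hcard k
    simp only [Finset.sum_add_distrib, ← Finset.mul_sum] at h2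
    simp [hH] at h2
    omega
  · rintro ⟨h, g⟩ hg
    set N := {z : (H × V) × (H × V) | z.1 ∈ {z : H × V | z.2 ∈ D z.1} ∧
      z.2 ∈ {z : H × V | z.2 ∈ D z.1} ∧ z.1 ≠ z.2 ∧ z.1 - z.2 = (h, g)}.ncard with hN
    have hN1 : N = ∑ k, ∑ x ∈ D (k + h), ∑ y ∈ D k, if x - y - g = 0 then 1 else 0 := by
      have e1 : ∀ k, (∑ x ∈ D (k + h), ∑ y ∈ D k, if x - y - g = 0 then 1 else 0) =
          ((D (k + h) ×ˢ D k).filter (fun z => z.1 - z.2 - g = 0)).card := by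
        intro k
        rw [Finset.card_filter, Finset.sum_product]
      simp only [e1]
      rw [← Finset.card_sigma, ← Set.ncard_coe_finset, hN]
      have inj : Function.Injective
          (fun w : (Σ _ : H, V × V) => (((w.1 + h, w.2.1), (w.1, w.2.2)) : (H × V) × (H × V))) := by
        rintro ⟨a, b, c⟩ ⟨a', b', c'⟩ h
        simp at h
        obtain ⟨⟨_, rfl⟩, rfl, rfl⟩ := h
        rfl
      rw [← Set.ncard_image_of_injective _ inj]
      congr 1
      ext ⟨⟨a, x⟩, ⟨b, y⟩⟩
      simp only [Set.mem_ofPred_eq, Set.mem_image, Finset.mem_coe, Finset.mem_sigma,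
        Finset.mem_filter, Finset.mem_product, Sigma.exists, Prod.exists, Finset.mem_univ,
        true_and, Prod.mk.injEq, Prod.mk_sub_mk]
      constructor
      · rintro ⟨hx, hy, hne, hh, hgg⟩
        have : a = b + h := by rw [← hh]; abel
        subst this
        exact ⟨b, x, y, ⟨⟨hx, hy⟩, by rw [hgg]; simp⟩, ⟨rfl, rfl⟩, rfl, rfl⟩
      · rintro ⟨b', x', y', ⟨⟨hx, hy⟩, hgg⟩, ⟨rfl, rfl⟩, rfl, rfl⟩
        refine ⟨hx, hy, ?_, by abel, sub_eq_zero.1 hgg⟩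
        intro hh
        obtain ⟨h1, h2⟩ := Prod.mk.inj hh
        apply hg
        simp [h2] at h1 hgg
        simp [h1, hgg]
    set f : H → AddChar V ℂ → ℂ := fun k χ => ∑ x ∈ D k, χ x with hf
    have hN2 : (m : ℂ) ^ 2 * N = ∑ χ : AddChar V ℂ, χ (-g) * ∑ k, f (k + h) χ * conj (f k χ) := by
      have e2 : ∀ v : V, (m : ℂ) ^ 2 * (if v = 0 then 1 else 0) = ∑ χ : AddChar V ℂ, χ v := by
        intro v
        rw [AddChar.sum_apply_eq_ite, hV]
        split_ifs <;> simp
      have e3 : ∀ (χ : AddChar V ℂ) (x y : V), χ (x - y - g) = χ (-g) * (χ x * conj (χ y)) := by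
        intro χ x y
        rw [← AddChar.map_neg_eq_conj, ← AddChar.map_add_eq_mul, ← AddChar.map_add_eq_mul]
        congr 1; abel
      rw [hN1]
      push_cast
      simp only [Finset.mul_sum, hf, map_sum, Finset.sum_mul, e2, e3]
      rw [Finset.sum_comm (s := (Finset.univ : Finset (AddChar V ℂ)))]
      refine Finset.sum_congr rfl fun k _ => ?_
      rw [Finset.sum_comm (s := (Finset.univ : Finset (AddChar V ℂ)))]
      rw [Finset.sum_comm]
      refine Finset.sum_congr rfl fun y _ => ?_
      rw [Finset.sum_comm (s := (Finset.univ : Finset (AddChar V ℂ)))]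
    have ha : ∀ k, ((D k).card : ℂ) = ((m : ℂ) ^ 2 - m) / 2 + if k = k0 then (m : ℂ) else 0 := by
      intro k
      have := congrArg (Nat.cast : ℕ → ℂ) (hcard k)
      push_cast at this
      split_ifs at this ⊢ <;> linear_combination this / 2
    have hS : ∀ χ : AddChar V ℂ, ∑ k, f (k + h) χ * conj (f k χ) =
        (if h = 0 then (m : ℂ) ^ 2 else 0) + if χ = 0 then ((m : ℂ) ^ 2 - m) * m ^ 2 else 0 := by
      intro χ
      by_cases hχ : χ = 0
      · subst hχ
        have hf0 : ∀ k, f k 0 = (D k).card := by intro k; simp [hf]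
        simp only [hf0, Complex.conj_natCast]
        simp only [ha, if_true]
        have hk : ∀ k : H, (k + h = k0) ↔ k = k0 - h := fun k => eq_sub_iff_add_eq.symm
        simp only [hk, add_mul, mul_add, Finset.sum_add_distrib]
        by_cases h0 : h = 0
        · subst h0
          simp [hH]
          ring
        · have h1 : k0 ≠ k0 - h := by simpa [eq_sub_iff_add_eq] using h0
          simp [hH, h0, h1]
          ring
      · obtain ⟨k1, hz, hk1⟩ := hchar χ hχ
        simp only [hχ, if_false, add_zero]
        rw [Finset.sum_eq_single k1]
        · split_ifs with h0
          · subst h0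
            rw [add_zero]
            rcases hk1 with h' | h' <;> simp [hf, h'] <;> ring
          · have : f (k1 + h) χ = 0 := hz _ (by simpa using h0)
            rw [this, zero_mul]
        · intro k _ hk
          have : f k χ = 0 := hz _ hk
          simp [this]
        · simp
    simp only [hS, mul_add, Finset.sum_add_distrib] at hN2
    rw [← Finset.sum_mul, AddChar.sum_apply_eq_ite] at hN2
    have h0 : (if -g = 0 then (Fintype.card V : ℂ) else 0) * (if h = 0 then (m : ℂ) ^ 2 else 0) = 0 := by
      by_cases h1 : g = 0
      · have : h ≠ 0 := by rintro rfl; exact hg (by simp [h1])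
        simp [this]
      · simp [h1]
    rw [h0] at hN2
    simp at hN2
    have hmc : (m : ℂ) ≠ 0 := by exact_mod_cast hm.ne'
    have : (N : ℂ) = (m : ℂ) ^ 2 - m := by
      apply mul_left_cancel₀ (pow_ne_zero 2 hmc)
      rw [hN2]; ring
    have : (N : ℂ) = ((m ^ 2 - m : ℕ) : ℂ) := by
      rw [this, Nat.cast_sub hm2]; push_cast; rfl
    exact_mod_cast this

/-- The vectors of a subspace, as a finset. -/
def vecs {K V : Type} [Field K] [AddCommGroup V] [Module K V] [Fintype V] (U : Submodule K V) :
    Finset V := by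
  classical exact Finset.univ.filter (fun v => v ∈ U)

/-- The nonzero vectors spanning a point of `T`. -/
def cone {K V : Type} [Field K] [AddCommGroup V] [Module K V] [Fintype V]
    (T : Set (Submodule K V)) : Finset V := by
  classical exact Finset.univ.filter (fun v => v ≠ 0 ∧ Submodule.span K {v} ∈ T)

/-- The nonzero vectors on one of the given lines. -/
def lvecs {K V ι : Type} [Field K] [AddCommGroup V] [Module K V] [Fintype V]
    (L : ι → Submodule K V) (J : Finset ι) : Finset V := by
  classical exact Finset.univ.filter (fun v => v ≠ 0 ∧ ∃ i ∈ J, v ∈ L i)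

section geom
variable {K V : Type} [Field K] [AddCommGroup V] [Module K V] [Fintype V]

lemma mem_vecs (U : Submodule K V) (v : V) : v ∈ vecs U ↔ v ∈ U := by simp [vecs]
lemma mem_cone (T : Set (Submodule K V)) (v : V) :
    v ∈ cone T ↔ v ≠ 0 ∧ Submodule.span K {v} ∈ T := by simp [cone]
lemma mem_lvecs {ι : Type} (L : ι → Submodule K V) (J : Finset ι) (v : V) :
    v ∈ lvecs L J ↔ v ≠ 0 ∧ ∃ i ∈ J, v ∈ L i := by simp [lvecs]

lemma card_vecs [Fintype K] (U : Submodule K V) :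
    (vecs U).card = Fintype.card K ^ Module.finrank K U := by
  classical
  rw [← Module.card_eq_pow_finrank (K := K) (V := U), vecs]
  exact (Fintype.card_subtype _).symm

lemma sum_erase_zero (U : Submodule K V) (χ : AddChar V ℂ) [DecidableEq V] :
    ∑ v ∈ (vecs U).erase 0, χ v = ∑ v ∈ vecs U, χ v - 1 := by
  rw [Finset.sum_erase_eq_sub ((mem_vecs U 0).2 U.zero_mem), AddChar.map_zero_eq_one]

lemma span_eq_of_mem {P : Submodule K V} (hP : Module.finrank K P = 1) {v : V} (hv : v ∈ P)
    (h0 : v ≠ 0) : Submodule.span K {v} = P := by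
  have : Module.Finite K V := Module.Finite.of_finite
  apply Submodule.eq_of_le_of_finrank_eq
  · simpa using hv
  · rw [hP, finrank_span_singleton h0]

lemma sum_cone (T : Finset (Submodule K V)) (hT : ∀ P ∈ T, Module.finrank K P = 1)
    (χ : AddChar V ℂ) :
    ∑ v ∈ cone (T : Set (Submodule K V)), χ v = ∑ P ∈ T, (∑ v ∈ vecs P, χ v - 1) := by
  classical
  rw [← Finset.sum_fiberwise_of_maps_to (s := cone (T : Set (Submodule K V))) (t := T)
    (g := fun v => Submodule.span K {v})]
  · refine Finset.sum_congr rfl fun P hP => ?_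
    rw [← sum_erase_zero]
    refine Finset.sum_congr ?_ fun _ _ => rfl
    ext v
    simp only [Finset.mem_filter, mem_cone, Finset.mem_erase, mem_vecs, Finset.mem_coe]
    constructor
    · rintro ⟨⟨h0, _⟩, rfl⟩
      exact ⟨h0, Submodule.mem_span_singleton_self v⟩
    · rintro ⟨h0, hv⟩
      have := span_eq_of_mem (hT P hP) hv h0
      exact ⟨⟨h0, by rw [this]; exact hP⟩, this⟩
  · intro v hv
    exact ((mem_cone _ _).1 hv).2

lemma sum_lvecs {ι : Type} (L : ι → Submodule K V) (J : Finset ι)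
    (hskew : ∀ i j, i ≠ j → L i ⊓ L j = ⊥) (χ : AddChar V ℂ) :
    ∑ v ∈ lvecs L J, χ v = ∑ i ∈ J, (∑ v ∈ vecs (L i), χ v - 1) := by
  classical
  have : lvecs L J = J.biUnion (fun i => (vecs (L i)).erase 0) := by
    ext v
    simp only [mem_lvecs, Finset.mem_biUnion, Finset.mem_erase, mem_vecs]
    tauto
  rw [this, Finset.sum_biUnion]
  · exact Finset.sum_congr rfl fun i _ => sum_erase_zero _ _
  · intro i _ j _ hij
    rw [Function.onFun, Finset.disjoint_left]
    intro v hv hv'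
    simp only [Finset.mem_erase, mem_vecs] at hv hv'
    have : v ∈ L i ⊓ L j := ⟨hv.2, hv'.2⟩
    rw [hskew i j hij] at this
    exact hv.1 (by simpa using this)

lemma exists_hyperplane [Fintype K] (hV : Module.finrank K V = 4) (χ : AddChar V ℂ) (hχ : χ ≠ 0) :
    ∃ W : Submodule K V, Module.finrank K W = 3 ∧
      (∀ U : Submodule K V, U ≤ W → ∑ v ∈ vecs U, χ v = (vecs U).card) ∧
      (∀ U : Submodule K V, ¬ U ≤ W → ∑ v ∈ vecs U, χ v = 0) := by
  classical
  have hfin : Module.Finite K V := Module.Finite.of_finite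
  let φ : V →+ AddChar K ℂ :=
    { toFun := fun v => χ.compAddMonoidHom ((AddMonoidHom.flip (smulAddHom K V)) v)
      map_zero' := by ext c; simp
      map_add' := by intro x y; ext c; simp [AddChar.map_add_eq_mul] }
  have hφ : ∀ v c, φ v c = χ (c • v) := fun v c => rfl
  let W : Submodule K V :=
    { carrier := {v | φ v = 0}
      zero_mem' := map_zero φ
      add_mem' := by
        intro a b ha hb
        simp only [Set.mem_ofPred_eq] at *
        rw [map_add, ha, hb, add_zero]
      smul_mem' := by
        intro c v hv
        simp only [Set.mem_ofPred_eq] at *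
        ext d
        rw [hφ, smul_smul, ← hφ, hv]
        simp }
  have hW : ∀ v, v ∈ W ↔ φ v = 0 := fun v => Iff.rfl
  refine ⟨W, ?_, ?_, ?_⟩
  · have hne : W ≠ ⊤ := by
      intro h
      apply hχ
      ext v
      have : v ∈ W := h ▸ Submodule.mem_top
      rw [hW] at this
      have := DFunLike.congr_fun this 1
      rw [hφ] at this
      simpa using this
    have hlt := Submodule.finrank_lt hne
    have hker : φ.ker = W.toAddSubgroup := by ext v; rfl
    have hc : Nat.card φ.ker * Nat.card φ.range = Nat.card V := by
      rw [← AddSubgroup.card_mul_index φ.ker, AddSubgroup.index_ker]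
    have h1 : Nat.card φ.range ≤ Fintype.card K := by
      rw [← AddChar.card_eq (α := K), ← Nat.card_eq_fintype_card]
      exact Nat.card_le_card_of_injective _ Subtype.val_injective
    have h2 : Nat.card φ.ker = Fintype.card K ^ Module.finrank K W := by
      rw [hker, ← Module.card_eq_pow_finrank (K := K) (V := W), ← Nat.card_eq_fintype_card]
      rfl
    have h3 : Nat.card V = Fintype.card K ^ 4 := by
      rw [← hV, ← Module.card_eq_pow_finrank (K := K) (V := V), ← Nat.card_eq_fintype_card]
    have h4 : Fintype.card K ^ 4 ≤ Fintype.card K ^ (Module.finrank K W + 1) := by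
      rw [← h3, ← hc, h2, pow_succ]
      exact Nat.mul_le_mul_left _ h1
    have := (Nat.pow_le_pow_iff_right (Fintype.one_lt_card (α := K))).1 h4
    omega
  · intro U hU
    rw [Finset.sum_congr rfl (g := fun _ => (1 : ℂ))]
    · simp
    · intro v hv
      have := hU ((mem_vecs _ _).1 hv)
      rw [hW] at this
      have := DFunLike.congr_fun this 1
      rw [hφ] at this
      simpa using this
  · intro U hU
    obtain ⟨v, hvU, hvW⟩ := SetLike.not_le_iff_exists.1 hU
    rw [hW] at hvW
    obtain ⟨c, hc⟩ := DFunLike.ne_iff.1 hvW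
    rw [hφ] at hc
    have e : ∑ v ∈ vecs U, χ v = ∑ u : U, (χ.compAddMonoidHom U.subtype.toAddMonoidHom) u := by
      rw [Finset.sum_subtype (vecs U) (mem_vecs U)]
      rfl
    rw [e, AddChar.sum_eq_zero_iff_ne_zero, AddChar.ne_zero_iff]
    exact ⟨⟨c • v, U.smul_mem c hvU⟩, hc⟩

end geom

lemma typeQ_arith (r q : ℕ) (hr : 0 < r) (hq : q = 2 * r + 1) :
    (q ^ 4 - 1) / (4 * (q - 1)) = (r + 1) * (2 * r ^ 2 + 2 * r + 1) ∧
    (q - 1) ^ 2 / 4 = r ^ 2 ∧ (q + 1) ^ 2 / 4 = (r + 1) ^ 2 ∧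
    (q ^ 2 - 1) / 2 = 2 * r ^ 2 + 2 * r ∧ (q ^ 2 + 1) / 2 = 2 * r ^ 2 + 2 * r + 1 := by
  subst hq
  refine ⟨?_, ?_, ?_, ?_, ?_⟩
  · have h1 : (2 * r + 1) ^ 4 - 1 =
        (4 * (2 * r + 1 - 1)) * ((r + 1) * (2 * r ^ 2 + 2 * r + 1)) := by
      simp only [Nat.add_sub_cancel]
      have : (2 * r + 1) ^ 4 = (4 * (2 * r)) * ((r + 1) * (2 * r ^ 2 + 2 * r + 1)) + 1 := by ring
      omega
    rw [h1, Nat.mul_div_cancel_left _ (by omega)]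
  · have : (2 * r + 1 - 1) ^ 2 = 4 * r ^ 2 := by simp only [Nat.add_sub_cancel]; ring
    omega
  · have : (2 * r + 1 + 1) ^ 2 = 4 * (r + 1) ^ 2 := by ring
    omega
  · have : (2 * r + 1) ^ 2 = 2 * (2 * r ^ 2 + 2 * r) + 1 := by ring
    omega
  · have : (2 * r + 1) ^ 2 = 2 * (2 * r ^ 2 + 2 * r) + 1 := by ring
    omega

section core
variable {K V : Type} [Field K] [AddCommGroup V] [Module K V] [Fintype V] [Fintype K]

lemma typeQ_card (r q : ℕ) (hr : 0 < r) (hq : q = 2 * r + 1) (hK : Fintype.card K = q)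
    (S : Set (Submodule K V)) (hS : IsProjTypeQ q K V S) :
    ((cone S).card : ℂ) = ((q : ℂ) ^ 4 - 1) / 4 := by
  classical
  obtain ⟨h1, h2, h3⟩ := hS
  obtain ⟨a1, -⟩ := typeQ_arith r q hr hq
  obtain ⟨T, rfl⟩ := S.toFinite.exists_finset_coe
  have := sum_cone T h1 0
  rw [Finset.sum_congr rfl (s₁ := T) (g := fun _ => (q : ℂ) - 1)] at this
  · rw [a1, Set.ncard_coe_finset] at h2
    simp [h2] at this
    rw [this, hq]
    push_cast
    ring
  · intro P hP
    simp [card_vecs, h1 P hP, hK]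

lemma typeQ_char (r q : ℕ) (hr : 0 < r) (hq : q = 2 * r + 1) (hK : Fintype.card K = q)
    (S : Set (Submodule K V)) (hS : IsProjTypeQ q K V S) (χ : AddChar V ℂ)
    (W : Submodule K V) (hW : Module.finrank K W = 3)
    (hW1 : ∀ U : Submodule K V, U ≤ W → ∑ v ∈ vecs U, χ v = (vecs U).card)
    (hW2 : ∀ U : Submodule K V, ¬ U ≤ W → ∑ v ∈ vecs U, χ v = 0) :
    ∃ e : ℕ, e ≤ 1 ∧ ∑ v ∈ cone S, χ v = ((q : ℂ) ^ 2 - 1) / 4 - q ^ 2 * e := by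
  classical
  obtain ⟨h1, h2, h3⟩ := hS
  obtain ⟨a1, a2, a3, -⟩ := typeQ_arith r q hr hq
  obtain ⟨T, rfl⟩ := S.toFinite.exists_finset_coe
  have key : ∑ v ∈ cone (T : Set (Submodule K V)), χ v =
      (q : ℂ) * (({P ∈ (T : Set (Submodule K V)) | P ≤ W}.ncard : ℕ) : ℂ) - (T.card : ℂ) := by
    rw [sum_cone T h1]
    have : {P ∈ (T : Set (Submodule K V)) | P ≤ W} = ((T.filter (· ≤ W) : Finset _) : Set _) := by
      ext; simp
    rw [this, Set.ncard_coe_finset, Finset.card_filter, Finset.sum_sub_distrib]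
    push_cast
    rw [Finset.mul_sum]
    congr 1
    · refine Finset.sum_congr rfl fun P hP => ?_
      by_cases h : P ≤ W
      · rw [hW1 P h, card_vecs, h1 P hP, hK]; simp [h]
      · rw [hW2 P h]; simp [h]
    · simp
  rw [a1, Set.ncard_coe_finset] at h2
  rcases h3 W hW with h | h
  · refine ⟨1, le_rfl, ?_⟩
    rw [key, h, h2, a2, hq]; push_cast; ring
  · refine ⟨0, by norm_num, ?_⟩
    rw [key, h, h2, a3, hq]; push_cast; ring

lemma line_char {ι : Type} (q : ℕ) (hK : Fintype.card K = q) (L : ι → Submodule K V)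
    (J : Finset ι) (hdim : ∀ i, Module.finrank K (L i) = 2)
    (hskew : ∀ i j, i ≠ j → L i ⊓ L j = ⊥) (χ : AddChar V ℂ) (W : Submodule K V)
    (hW1 : ∀ U : Submodule K V, U ≤ W → ∑ v ∈ vecs U, χ v = (vecs U).card)
    (hW2 : ∀ U : Submodule K V, ¬ U ≤ W → ∑ v ∈ vecs U, χ v = 0) [DecidablePred fun i => L i ≤ W] :
    ∑ v ∈ lvecs L J, χ v = (q : ℂ) ^ 2 * (J.filter (fun i => L i ≤ W)).card - J.card := by
  rw [sum_lvecs L J hskew, Finset.sum_sub_distrib, Finset.card_filter]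
  push_cast
  rw [Finset.mul_sum]
  congr 1
  · refine Finset.sum_congr rfl fun i hi => ?_
    by_cases h : L i ≤ W
    · rw [hW1 _ h, card_vecs, hdim, hK]; simp [h]
    · rw [hW2 _ h]; simp [h]
  · simp

lemma line_card {ι : Type} (q : ℕ) (hK : Fintype.card K = q) (L : ι → Submodule K V)
    (J : Finset ι) (hdim : ∀ i, Module.finrank K (L i) = 2)
    (hskew : ∀ i j, i ≠ j → L i ⊓ L j = ⊥) :
    ((lvecs L J).card : ℂ) = ((q : ℂ) ^ 2 - 1) * J.card := by
  have := sum_lvecs L J hskew 0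
  simp [card_vecs, hdim, hK] at this
  rw [this]; ring

lemma core (r q : ℕ) (hr : 0 < r) (hq : q = 2 * r + 1)
    (hK : Fintype.card K = q) (hV : Module.finrank K V = 4)
    (Lns : Fin (q ^ 2 + 1) → Submodule K V)
    (hdim : ∀ i, Module.finrank K (Lns i) = 2)
    (hskew : ∀ i j, i ≠ j → Lns i ⊓ Lns j = ⊥)
    (S : Fin 4 → Set (Submodule K V))
    (hQ : ∀ k, IsProjTypeQ q K V (S k))
    (hdisj : ∀ k k', k ≠ k' → Disjoint (S k) (S k'))
    (h02 : S 0 ∪ S 2 = {P : Submodule K V | Module.finrank K P = 1 ∧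
      ∃ i : Fin (q ^ 2 + 1), (i : ℕ) ≤ (q ^ 2 - 1) / 2 ∧ P ≤ Lns i})
    (h13 : S 1 ∪ S 3 = {P : Submodule K V | Module.finrank K P = 1 ∧
      ∃ i : Fin (q ^ 2 + 1), (q ^ 2 + 1) / 2 ≤ (i : ℕ) ∧ P ≤ Lns i}) :
    ∃ D : Fin 4 → Finset V,
      (∀ k, 2 * (D k).card + q ^ 2 = (q ^ 2) ^ 2 + if k = 3 then 2 * q ^ 2 else 0) ∧
      ∀ χ : AddChar V ℂ, χ ≠ 0 → ∃ k1, (∀ k, k ≠ k1 → ∑ x ∈ D k, χ x = 0) ∧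
      ((∑ x ∈ D k1, χ x = (q ^ 2 : ℕ)) ∨ (∑ x ∈ D k1, χ x = -(q ^ 2 : ℕ))) := by
  classical
  obtain ⟨-, -, -, a4, a5⟩ := typeQ_arith r q hr hq
  rw [a4] at h02
  rw [a5] at h13
  have hq2 : q ^ 2 = 4 * r ^ 2 + 4 * r + 1 := by rw [hq]; ring
  have hqc : (q : ℂ) = 2 * r + 1 := by rw [hq]; push_cast; ring
  have hq0 : (q : ℂ) ^ 2 ≠ 0 := by
    apply pow_ne_zero
    have : q ≠ 0 := by omega
    exact_mod_cast this
  have hVcard : Fintype.card V = q ^ 4 := by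
    rw [Module.card_eq_pow_finrank (K := K), hV, hK]
  -- the two halves of the spread
  let F1 : Finset (Fin (q ^ 2 + 1)) := Finset.univ.filter (fun i => (i : ℕ) ≤ 2 * r ^ 2 + 2 * r)
  let F2 : Finset (Fin (q ^ 2 + 1)) := Finset.univ.filter (fun i => 2 * r ^ 2 + 2 * r + 1 ≤ (i : ℕ))
  have hF12 : Disjoint F1 F2 := by
    rw [Finset.disjoint_left]; intro i; simp [F1, F2]
  have hFu : F1 ∪ F2 = Finset.univ := by
    ext i; simp [F1, F2]; omega
  have hF1 : F1.card = 2 * r ^ 2 + 2 * r + 1 := by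
    have := Fin.card_Iic (⟨2 * r ^ 2 + 2 * r, by omega⟩ : Fin (q ^ 2 + 1))
    rw [← this]
    congr 1
    ext i; simp [F1, Fin.le_def]
  have hF2 : F2.card = 2 * r ^ 2 + 2 * r + 1 := by
    have := Finset.card_union_of_disjoint hF12
    rw [hFu, hF1, Finset.card_univ, Fintype.card_fin] at this
    omega
  obtain ⟨J1, hJ1, hJ1c⟩ := Finset.exists_subset_card_eq (s := F1) (n := r ^ 2 + r) (by omega)
  obtain ⟨J2, hJ2, hJ2c⟩ := Finset.exists_subset_card_eq (s := F2) (n := r ^ 2 + r) (by omega)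
  -- cones versus line halves
  have hc02 : lvecs Lns F1 = cone (S 0 ∪ S 2) := by
    ext v
    rw [mem_lvecs, mem_cone, h02]
    simp only [Set.mem_ofPred_eq, Submodule.span_singleton_le_iff_mem, F1, Finset.mem_filter,
      Finset.mem_univ, true_and]
    refine and_congr_right fun h0 => ?_
    simp [finrank_span_singleton h0]
  have hc13 : lvecs Lns F2 = cone (S 1 ∪ S 3) := by
    ext v
    rw [mem_lvecs, mem_cone, h13]
    simp only [Set.mem_ofPred_eq, Submodule.span_singleton_le_iff_mem, F2, Finset.mem_filter,
      Finset.mem_univ, true_and]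
    refine and_congr_right fun h0 => ?_
    simp [finrank_span_singleton h0]
  have hcu : ∀ A B : Set (Submodule K V), cone (A ∪ B) = cone A ∪ cone B := by
    intro A B; ext v; simp only [mem_cone, Finset.mem_union, Set.mem_union]; tauto
  have hcd : ∀ k k', k ≠ k' → Disjoint (cone (S k)) (cone (S k')) := by
    intro k k' h
    rw [Finset.disjoint_left]
    intro v hv hv'
    exact Set.disjoint_left.1 (hdisj k k' h) ((mem_cone _ _).1 hv).2 ((mem_cone _ _).1 hv').2
  have hlmono : ∀ {J J' : Finset (Fin (q ^ 2 + 1))}, J ⊆ J' → lvecs Lns J ⊆ lvecs Lns J' := by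
    intro J J' h v
    simp only [mem_lvecs]
    rintro ⟨h0, i, hi, hv⟩
    exact ⟨h0, i, h hi, hv⟩
  let J : Fin 4 → Finset (Fin (q ^ 2 + 1)) := ![J2, J1, J2, J1]
  have hJc : ∀ k, (J k).card = r ^ 2 + r := by
    intro k; fin_cases k <;> simp [J, hJ1c, hJ2c]
  have hBd : ∀ k, Disjoint (cone (S k)) (lvecs Lns (J k)) := by
    have h2 : ∀ k, k = 0 ∨ k = 2 → Disjoint (cone (S k)) (lvecs Lns J2) := by
      intro k hk
      refine Finset.disjoint_of_subset_right (hlmono hJ2) ?_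
      rw [hc13, hcu, Finset.disjoint_union_right]
      rcases hk with rfl | rfl <;> exact ⟨hcd _ _ (by decide), hcd _ _ (by decide)⟩
    have h1 : ∀ k, k = 1 ∨ k = 3 → Disjoint (cone (S k)) (lvecs Lns J1) := by
      intro k hk
      refine Finset.disjoint_of_subset_right (hlmono hJ1) ?_
      rw [hc02, hcu, Finset.disjoint_union_right]
      rcases hk with rfl | rfl <;> exact ⟨hcd _ _ (by decide), hcd _ _ (by decide)⟩
    intro k
    fin_cases k
    · exact h2 0 (by simp)
    · exact h1 1 (by simp)
    · exact h2 2 (by simp)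
    · exact h1 3 (by simp)
  let B : Fin 4 → Finset V := fun k => cone (S k) ∪ lvecs Lns (J k)
  have hBcard : ∀ k, ((B k).card : ℂ) = ((q : ℂ) ^ 4 - q ^ 2) / 2 := by
    intro k
    simp only [B]
    rw [Finset.card_union_of_disjoint (hBd k)]
    push_cast
    rw [typeQ_card r q hr hq hK _ (hQ k), line_card q hK Lns _ hdim hskew, hJc]
    push_cast
    rw [hqc]; ring
  refine ⟨fun k => if k = 3 then (B k)ᶜ else B k, ?_, ?_⟩
  · intro k
    have hb : 2 * (B k).card + q ^ 2 = q ^ 4 := by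
      have : (2 : ℂ) * (B k).card + q ^ 2 = q ^ 4 := by rw [hBcard]; ring
      exact_mod_cast this
    have h4 : (q ^ 2) ^ 2 = q ^ 4 := by ring
    by_cases hk : k = 3
    · simp only [hk, if_true]
      rw [Finset.card_compl, hVcard]
      rw [hk] at hb
      omega
    · simp only [hk, if_false]
      omega
  · intro χ hχ
    obtain ⟨W, hW, hW1, hW2⟩ := exists_hyperplane hV χ hχ
    choose e he hec using fun k => typeQ_char r q hr hq hK (S k) (hQ k) χ W hW hW1 hW2
    have hl := fun J => line_char q hK Lns J hdim hskew χ W hW1 hW2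
    set T : Finset (Fin (q ^ 2 + 1)) → ℕ := fun J => (J.filter (fun i => Lns i ≤ W)).card with hT
    have hl' : ∀ J, ∑ v ∈ lvecs Lns J, χ v = (q : ℂ) ^ 2 * T J - J.card := hl
    have hTmono : ∀ {J J'}, J ⊆ J' → T J ≤ T J' := fun h =>
      Finset.card_le_card (Finset.filter_subset_filter _ h)
    have r1 : e 0 + e 2 + T F1 = 1 := by
      have h := hl' F1
      rw [hc02, hcu, Finset.sum_union (hcd 0 2 (by decide)), hec, hec, hF1] at h
      have : ((e 0 : ℂ) + e 2 + T F1) = 1 := by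
        apply mul_left_cancel₀ hq0
        push_cast at h
        linear_combination (-1 : ℂ) * h + (-1/2 : ℂ) * (q + (2 * r + 1)) * hqc
      exact_mod_cast this
    have r2 : e 1 + e 3 + T F2 = 1 := by
      have h := hl' F2
      rw [hc13, hcu, Finset.sum_union (hcd 1 3 (by decide)), hec, hec, hF2] at h
      have : ((e 1 : ℂ) + e 3 + T F2) = 1 := by
        apply mul_left_cancel₀ hq0
        push_cast at h
        linear_combination (-1 : ℂ) * h + (-1/2 : ℂ) * (q + (2 * r + 1)) * hqc
      exact_mod_cast this
    have r3 : T F1 + T F2 = 1 := by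
      have hcov : lvecs Lns Finset.univ = Finset.univ.erase 0 := by
        apply Finset.eq_of_subset_of_card_le
        · intro v hv
          simpa using ((mem_lvecs _ _ _).1 hv).1
        · rw [Finset.card_erase_of_mem (Finset.mem_univ _), Finset.card_univ, hVcard]
          have := line_card q hK Lns Finset.univ hdim hskew
          rw [Finset.card_univ, Fintype.card_fin] at this
          have h2 : (lvecs Lns Finset.univ).card + 1 = q ^ 4 := by
            have : ((lvecs Lns Finset.univ).card : ℂ) + 1 = (q : ℂ) ^ 4 := by
              rw [this]; push_cast; ring
            exact_mod_cast this
          omega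
      have h := hl' Finset.univ
      rw [hcov, Finset.sum_erase_eq_sub (Finset.mem_univ _), AddChar.sum_eq_zero_iff_ne_zero.2 hχ,
        AddChar.map_zero_eq_one, Finset.card_univ, Fintype.card_fin] at h
      have h3 : T Finset.univ = T F1 + T F2 := by
        rw [← hFu]
        simp only [hT]
        rw [Finset.filter_union, Finset.card_union_of_disjoint]
        exact Finset.disjoint_filter_filter hF12
      have : (T Finset.univ : ℂ) = 1 := by
        apply mul_left_cancel₀ hq0
        push_cast at h
        linear_combination -h
      rw [← h3]
      exact_mod_cast this
    have hB : ∀ k, ∑ v ∈ B k, χ v = (q : ℂ) ^ 2 * (((T (J k) : ℤ) - (e k : ℤ) : ℤ) : ℂ) := by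
      intro k
      simp only [B]
      rw [Finset.sum_union (hBd k), hec, hl', hJc]
      push_cast
      rw [hqc]; ring
    have hD : ∀ k, ∑ v ∈ (if k = 3 then (B k)ᶜ else B k), χ v =
        (q : ℂ) ^ 2 * ((if k = 3 then (e k : ℤ) - T (J k) else (T (J k) : ℤ) - e k : ℤ) : ℂ) := by
      intro k
      split_ifs
      · have := Finset.sum_add_sum_compl (B k) χ
        rw [AddChar.sum_eq_zero_iff_ne_zero.2 hχ, hB] at this
        push_cast at this ⊢
        linear_combination this
      · exact hB k
    have m1 := hTmono hJ1
    have m2 := hTmono hJ2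
    have hfin : ∃ k1 : Fin 4, (∀ k, k ≠ k1 →
        (if k = 3 then (e k : ℤ) - T (J k) else (T (J k) : ℤ) - e k : ℤ) = 0) ∧
        ((if k1 = 3 then (e k1 : ℤ) - T (J k1) else (T (J k1) : ℤ) - e k1 : ℤ) = 1 ∨
        (if k1 = 3 then (e k1 : ℤ) - T (J k1) else (T (J k1) : ℤ) - e k1 : ℤ) = -1) := by
      by_cases c0 : T J2 = e 0
      · by_cases c2 : T J2 = e 2
        · by_cases c1 : T J1 = e 1
          · refine ⟨3, ?_, ?_⟩
            · intro k hk
              fin_cases k <;> simp [J] at hk ⊢ <;> omega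
            · simp [J]; omega
          · refine ⟨1, ?_, ?_⟩
            · intro k hk
              fin_cases k <;> simp [J] at hk ⊢ <;> omega
            · simp [J]; omega
        · refine ⟨2, ?_, ?_⟩
          · intro k hk
            fin_cases k <;> simp [J] at hk ⊢ <;> omega
          · simp [J]; omega
      · refine ⟨0, ?_, ?_⟩
        · intro k hk
          fin_cases k <;> simp [J] at hk ⊢ <;> omega
        · simp [J]; omega
    obtain ⟨k1, hz, hk1⟩ := hfin
    refine ⟨k1, ?_, ?_⟩
    · intro k hk
      rw [hD, hz k hk]; simp
    · simp only [hD]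
      rcases hk1 with h | h
      · left; rw [h]; push_cast; ring
      · right; rw [h]; push_cast; ring

end core

lemma exists_addEquiv_aux (p n : ℕ) [Fact p.Prime] (A B : Type) [AddCommGroup A] [AddCommGroup B]
    [Fintype A] [Fintype B] [Module (ZMod p) A] [Module (ZMod p) B]
    (hcA : Fintype.card A = n) (hcB : Fintype.card B = n) : Nonempty (A ≃+ B) := by
  have hp : p.Prime := Fact.out
  have h1 := Module.card_eq_pow_finrank (K := ZMod p) (V := A)
  have h2 := Module.card_eq_pow_finrank (K := ZMod p) (V := B)
  rw [hcA, ZMod.card] at h1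
  rw [hcB, h1, ZMod.card] at h2
  have h3 := Nat.pow_right_injective hp.two_le h2
  obtain ⟨f⟩ := FiniteDimensional.nonempty_linearEquiv_of_finrank_eq (R := ZMod p) h3
  exact ⟨f.toAddEquiv⟩

lemma exists_addEquiv (p n : ℕ) (hp : p.Prime) (A B : Type) [AddCommGroup A] [AddCommGroup B]
    [Fintype A] [Fintype B] (hA : ∀ x : A, p • x = 0) (hB : ∀ x : B, p • x = 0)
    (hcA : Fintype.card A = n) (hcB : Fintype.card B = n) : Nonempty (A ≃+ B) := by
  have : Fact p.Prime := ⟨hp⟩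
  let _ : Module (ZMod p) A := AddCommGroup.zmodModule hA
  let _ : Module (ZMod p) B := AddCommGroup.zmodModule hB
  exact exists_addEquiv_aux p n A B hcA hcB

/-- The Wilson–Xiang theorem: a spread of `PG(3,q)` together with four pairwise
disjoint projective sets of type Q, half of the spread covering `S₀ ∪ S₂` and the
other half covering `S₁ ∪ S₃`, yields Menon–Hadamard difference sets in `H × G`
for `H = ℤ/4` and `H = ℤ/2 × ℤ/2`, `G` elementary abelian of order `q⁴`. -/
theorem spread_typeQ_gives_MHDS
    (p s q : ℕ) (hp : p.Prime) (hpodd : p ≠ 2) (hs : 0 < s) (hq : q = p ^ s)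
    (K : Type) [Field K] [Fintype K] (hK : Fintype.card K = q)
    (V : Type) [AddCommGroup V] [Module K V] (hV : Module.finrank K V = 4)
    (Lns : Fin (q ^ 2 + 1) → Submodule K V)
    (hdim : ∀ i, Module.finrank K (Lns i) = 2)
    (hskew : ∀ i j, i ≠ j → Lns i ⊓ Lns j = ⊥)
    (S : Fin 4 → Set (Submodule K V))
    (hQ : ∀ k, IsProjTypeQ q K V (S k))
    (hdisj : ∀ k k', k ≠ k' → Disjoint (S k) (S k'))
    (h02 : S 0 ∪ S 2 = {P : Submodule K V | Module.finrank K P = 1 ∧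
      ∃ i : Fin (q ^ 2 + 1), (i : ℕ) ≤ (q ^ 2 - 1) / 2 ∧ P ≤ Lns i})
    (h13 : S 1 ∪ S 3 = {P : Submodule K V | Module.finrank K P = 1 ∧
      ∃ i : Fin (q ^ 2 + 1), (q ^ 2 + 1) / 2 ≤ (i : ℕ) ∧ P ≤ Lns i}) :
    ∀ (G : Type) [AddCommGroup G] [Fintype G], Fintype.card G = q ^ 4 →
      (∀ x : G, p • x = 0) →
      (∃ D : Set (ZMod 4 × G), IsMHDS (q ^ 2) D) ∧
      (∃ D : Set ((ZMod 2 × ZMod 2) × G), IsMHDS (q ^ 2) D) := by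
  intro G _ _ hG hpG
  classical
  have : Module.Finite K V := Module.finite_of_finrank_pos (by omega)
  have : Finite V := Module.finite_of_finite K
  have : Fintype V := Fintype.ofFinite V
  have hodd : Odd q := by
    rw [hq]; exact (hp.odd_of_ne_two hpodd).pow
  obtain ⟨r, hr⟩ := hodd
  have hr0 : 0 < r := by
    have : 1 < q := by rw [← hK]; exact Fintype.one_lt_card
    omega
  have hVcard : Fintype.card V = q ^ 4 := by
    rw [Module.card_eq_pow_finrank (K := K), hV, hK]
  have hpK : (p : K) = 0 := by
    have h := FiniteField.cast_card_eq_zero K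
    rw [hK, hq] at h
    push_cast at h
    exact eq_zero_of_pow_eq_zero h
  have hpV : ∀ x : V, p • x = 0 := by
    intro x
    rw [← Nat.cast_smul_eq_nsmul K, hpK, zero_smul]
  obtain ⟨e⟩ := exists_addEquiv p (q ^ 4) hp V G hpV hpG hVcard hG
  obtain ⟨D, hD1, hD2⟩ := core r q hr0 hr hK hV Lns hdim hskew S hQ hdisj h02 h13
  have main : ∀ (H : Type) [AddCommGroup H] [Fintype H] [DecidableEq H],
      Fintype.card H = 4 → ∃ D : Set (H × G), IsMHDS (q ^ 2) D := by
    intro H _ _ _ hH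
    let ε : H ≃ Fin 4 := Fintype.equivFinOfCardEq hH
    have := mhds_of_chars (H := H) (V := V) (q ^ 2) hH (by rw [hVcard]; ring)
      (by rw [hr]; positivity) (fun k => D (ε k)) (ε.symm 3)
      (by
        intro k
        rw [hD1]
        simp only [Equiv.eq_symm_apply])
      (by
        intro χ hχ
        obtain ⟨k1, h1, h2⟩ := hD2 χ hχ
        refine ⟨ε.symm k1, ?_, by simpa using h2⟩
        intro k hk
        exact h1 _ (fun h => hk (by rw [← h]; simp)))
    exact ⟨_, isMHDS_image _ _ ((AddEquiv.refl H).prodCongr e) this⟩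
  exact ⟨main _ (by simp), main _ (by simp)⟩

end
end

section
/- Let q be an odd prime power, ω a primitive element of F_{q²}, and set X = {x ∈ F_{q²} : Tr_{q²/q}(x) ∈ C_0^{(2,q)}}, X' = {xω : Tr_{q²/q}(x) ∈ C_0^{(2,q)}}, X_1 = X \ (X ∩ X'), X_2 = X' \ (X ∩ X'), X_3 = X ∩ X', X_4 = F_{q²} \ (X_1 ∪ X_2 ∪ X_3). Let τ = 0 if q ≡ 1 (mod 4) and τ = 1 if q ≡ 3 (mod 4), and define C_0 = {(x,xy) : x ∈ C_0^{(2,q²)}, y ∈ X_1} ∪ {(x,xy) : x ∈ C_1^{(2,q²)}, y ∈ X_2} ∪ {(0,x) : x ∈ C_τ^{(2,q²)}}, C_1 = {(x,xy) : x ∈ C_0^{(2,q²)}, y ∈ X_3} ∪ {(x,xy) : x ∈ C_1^{(2,q²)}, y ∈ X_4}, C_2 = {(x,xy) : x ∈ C_1^{(2,q²)}, y ∈ X_1} ∪ {(x,xy) : x ∈ C_0^{(2,q²)}, y ∈ X_2} ∪ {(0,x) : x ∈ C_{τ+1}^{(2,q²)}}, C_3 = {(x,xy) : x ∈ C_1^{(2,q²)},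 y ∈ X_3} ∪ {(x,xy) : x ∈ C_0^{(2,q²)}, y ∈ X_4}. Then each C_i (i = 0,1,2,3) is of type Q, the C_i are pairwise disjoint, and with K_y = {(x,xy) : x ∈ F_{q²}} for y ∈ F_{q²} and K_∞ = {(0,x) : x ∈ F_{q²}} one has C_0 ∪ C_2 ∪ {(0,0)} = (∪_{y ∈ X_1∪X_2} K_y) ∪ K_∞ and C_1 ∪ C_3 ∪ {(0,0)} = ∪_{y ∈ X_3∪X_4} K_y. -/
noncomputable section

def zetaP (p : ℕ) : ℂ := Complex.exp (2 * Real.pi * Complex.I / p)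

def psiL (p : ℕ) (L : Type) [Field L] [Fintype L] [CharP L p] (x : L) : ℂ :=
  letI : Algebra (ZMod p) L := ZMod.algebra L p
  zetaP p ^ (Algebra.trace (ZMod p) L x).val

def psiSum (p : ℕ) (L : Type) [Field L] [Fintype L] [CharP L p]
    (a b : L) (E : Set (L × L)) : ℂ :=
  ∑ᶠ z ∈ E, psiL p L (a * z.1 + b * z.2)

def IsTypeQ (p q : ℕ) (L : Type) [Field L] [Fintype L] [CharP L p]
    (E : Set (L × L)) : Prop :=
  E.ncard = (q ^ 4 - 1) / 4 ∧
    ∀ a b : L, (a, b) ≠ ((0 : L), (0 : L)) →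
      psiSum p L a b E = ((q : ℂ) ^ 2 - 1) / 4 ∨
      psiSum p L a b E = (-3 * (q : ℂ) ^ 2 - 1) / 4

/-- the cyclotomic class `C_i^{(N,q²)} = ω^i⟨ω^N⟩`. -/
def cyc (L : Type) [Field L] (ω : L) (N i : ℕ) : Set L :=
  {x | ∃ k : ℕ, x = ω ^ i * (ω ^ N) ^ k}

def IsPrim (L : Type) [Field L] (ω : L) : Prop :=
  ∀ x : L, x ≠ 0 → ∃ n : ℕ, x = ω ^ n

/-- nonzero squares of `K` (the class `C₀^{(2,q)}`). -/
def sqSet (K : Type) [Field K] : Set K := {y | ∃ z : K, z ≠ 0 ∧ y = z ^ 2}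

/-! ### Auxiliary results -/

namespace ChenAux

set_option linter.unusedSectionVars false

open Classical in
/-- complex valued quadratic character -/
def eta (L : Type) [Field L] [Fintype L] (x : L) : ℂ := ((quadraticChar L x : ℤ) : ℂ)

section basic
variable {L : Type} [Field L] [Fintype L]

lemma eta_mul (x y : L) : eta L (x * y) = eta L x * eta L y := by
  unfold eta; rw [map_mul, Int.cast_mul]

lemma eta_zero : eta L 0 = 0 := by simp [eta]

lemma eta_one : eta L 1 = 1 := by simp [eta]

lemma eta_pow (x : L) (n : ℕ) : eta L (x ^ n) = eta L x ^ n := by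
  unfold eta; rw [map_pow, Int.cast_pow]

lemma eta_dich {x : L} (hx : x ≠ 0) : eta L x = 1 ∨ eta L x = -1 := by
  classical
  rcases quadraticChar_dichotomy hx with h | h
  · left; unfold eta; convert congrArg (Int.cast : ℤ → ℂ) h; simp
  · right; unfold eta; convert congrArg (Int.cast : ℤ → ℂ) h; simp

lemma eta_sq {x : L} (hx : x ≠ 0) : eta L x * eta L x = 1 := by
  rcases eta_dich hx with h | h <;> rw [h] <;> norm_num

lemma eta_sum (h2 : ringChar L ≠ 2) : ∑ x : L, eta L x = 0 := by
  classical
  unfold eta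
  rw [← Int.cast_sum, quadraticChar_sum_zero h2, Int.cast_zero]

lemma eta_exists (h2 : ringChar L ≠ 2) : ∃ x : L, x ≠ 0 ∧ eta L x = -1 := by
  classical
  obtain ⟨a, ha⟩ := quadraticChar_exists_neg_one' h2
  refine ⟨a, a.ne_zero, ?_⟩
  unfold eta; convert congrArg (Int.cast : ℤ → ℂ) ha; simp

lemma eta_eq_ite (h2 : ringChar L ≠ 2) {x : L} (hx : x ≠ 0) :
    (x ^ (Fintype.card L / 2) = 1 → eta L x = 1) ∧
    (x ^ (Fintype.card L / 2) ≠ 1 → eta L x = -1) := by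
  classical
  have h := quadraticChar_eq_pow_of_char_ne_two h2 hx
  have h' : eta L x = if x ^ (Fintype.card L / 2) = 1 then 1 else -1 := by
    unfold eta
    have := congrArg (Int.cast : ℤ → ℂ) h
    rw [this]; split_ifs <;> simp
  constructor <;> intro hh <;> simp [h', hh]

lemma neg_one_ne (h2 : ringChar L ≠ 2) : (-1 : L) ≠ 1 := Ring.neg_one_ne_one_of_char_ne_two h2

/-- `eta ω = -1` for a primitive element. -/
lemma eta_prim (h2 : ringChar L ≠ 2) {ω : L} (hω : IsPrim L ω) : ω ≠ 0 ∧ eta L ω = -1 := by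
  obtain ⟨a, ha, hea⟩ := eta_exists h2
  obtain ⟨n, hn⟩ := hω a ha
  rw [hn, eta_pow] at hea
  have h0 : ω ≠ 0 := by
    rintro rfl
    rw [eta_zero] at hea
    rcases Nat.eq_zero_or_pos n with h | h
    · subst h; norm_num at hea
    · rw [zero_pow h.ne'] at hea; norm_num at hea
  refine ⟨h0, ?_⟩
  rcases eta_dich h0 with h | h
  · rw [h, one_pow] at hea; norm_num at hea
  · exact h

lemma mem_cyc (h2 : ringChar L ≠ 2) {ω : L} (hω : IsPrim L ω) (i : ℕ) (x : L) :
    x ∈ cyc L ω 2 i ↔ x ≠ 0 ∧ eta L x = (-1) ^ i := by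
  obtain ⟨h0, he⟩ := eta_prim h2 hω
  constructor
  · rintro ⟨k, rfl⟩
    refine ⟨by positivity, ?_⟩
    rw [eta_mul, eta_pow, eta_pow, eta_pow, he]; simp
  · rintro ⟨hx, hex⟩
    obtain ⟨n, rfl⟩ := hω x hx
    rw [eta_pow, he] at hex
    have hpar : Even n ↔ Even i := by
      rcases Nat.even_or_odd n with h | h <;> rcases Nat.even_or_odd i with h' | h'
      · simp [h, h']
      · rw [h.neg_one_pow, h'.neg_one_pow] at hex; norm_num at hex
      · rw [h.neg_one_pow, h'.neg_one_pow] at hex; norm_num at hex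
      · simp [Nat.not_even_iff_odd.2 h, Nat.not_even_iff_odd.2 h']
    have hc : 1 < Fintype.card L := Fintype.one_lt_card
    have hle : i ≤ n + 2 * i * (Fintype.card L - 1) := by
      have : 1 ≤ Fintype.card L - 1 := by omega
      nlinarith
    have hev : Even (n + 2 * i * (Fintype.card L - 1) - i) := by
      rw [Nat.even_sub hle, Nat.even_add]
      simp [hpar]
    obtain ⟨k, hk⟩ := hev
    refine ⟨k, ?_⟩
    rw [← pow_mul, ← pow_add]
    have : i + 2 * k = n + (Fintype.card L - 1) * (2 * i) := by
      rw [mul_comm (Fintype.card L - 1)]; omega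
    rw [this, pow_add, pow_mul, FiniteField.pow_card_sub_one_eq_one _ h0, one_pow, mul_one]

end basic

section ext
variable {K L : Type} [Field K] [Fintype K] [Field L] [Fintype L] [Algebra K L]

lemma finrank_two {q : ℕ} (hq1 : 1 < q) (hK : Fintype.card K = q)
    (hL : Fintype.card L = q ^ 2) : Module.finrank K L = 2 := by
  have := Module.card_eq_pow_finrank (K := K) (V := L)
  rw [hL, hK] at this
  exact (Nat.pow_right_injective hq1 this).symm

lemma trace_formula {q : ℕ} (hq1 : 1 < q) (hK : Fintype.card K = q)
    (hL : Fintype.card L = q ^ 2) (x : L) :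
    algebraMap K L (Algebra.trace K L x) = x + x ^ q := by
  rw [FiniteField.algebraMap_trace_eq_sum_pow, finrank_two hq1 hK hL, Nat.card_eq_fintype_card, hK]
  simp [Finset.sum_range_succ]

variable {m : ℕ} (hm : 0 < m) (hK : Fintype.card K = 2 * m + 1)
  (hL : Fintype.card L = (2 * m + 1) ^ 2) (h2 : ringChar L ≠ 2)
include hm hK hL h2

omit hm hK [Fintype K] [Field K] [Algebra K L] h2 in
lemma half_card : Fintype.card L / 2 = 2 * m * (m + 1) := by
  rw [hL]; ring_nf; omega

lemma eta_alg {u : K} (hu : u ≠ 0) : eta L (algebraMap K L u) = 1 := by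
  have hu' : algebraMap K L u ≠ 0 := by simpa using hu
  apply (eta_eq_ite h2 hu').1
  rw [half_card hL, ← map_pow, pow_mul]
  have := FiniteField.pow_card_sub_one_eq_one u hu
  rw [hK, Nat.add_sub_cancel] at this
  rw [this]; simp

lemma eta_tr0 {x : L} (hx : x ≠ 0) (ht : Algebra.trace K L x = 0) :
    eta L x = (-1) ^ (m + 1) := by
  have h := trace_formula (by omega) hK hL x
  rw [ht, map_zero] at h
  have h1 : x ^ (2 * m) = -1 := by
    have : x * (x ^ (2 * m) + 1) = 0 := by rw [h]; ring
    rcases mul_eq_zero.1 this with h' | h'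
    · exact absurd h' hx
    · exact eq_neg_of_add_eq_zero_left h'
  have h3 : x ^ (Fintype.card L / 2) = (-1) ^ (m + 1) := by
    rw [half_card hL, pow_mul, h1]
  rcases Nat.even_or_odd (m + 1) with he | ho
  · rw [he.neg_one_pow] at h3 ⊢
    exact (eta_eq_ite h2 hx).1 h3
  · rw [ho.neg_one_pow] at h3 ⊢
    apply (eta_eq_ite h2 hx).2
    rw [h3]; exact neg_one_ne h2

lemma pair_bij {ω : L} (h0 : ω ≠ 0) (he : eta L ω = -1) :
    Function.Bijective (fun y : L => (Algebra.trace K L y, Algebra.trace K L (y * ω⁻¹))) := by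
  rw [Fintype.bijective_iff_injective_and_card]
  constructor
  · intro y z hyz
    simp only [Prod.mk.injEq] at hyz
    by_contra hne
    have hd : y - z ≠ 0 := sub_ne_zero.2 hne
    have t1 : Algebra.trace K L (y - z) = 0 := by rw [map_sub, hyz.1, sub_self]
    have t2 : Algebra.trace K L ((y - z) * ω⁻¹) = 0 := by rw [sub_mul, map_sub, hyz.2, sub_self]
    have e1 := eta_tr0 hm hK hL h2 hd t1
    have e2 := eta_tr0 hm hK hL h2 (mul_ne_zero hd (inv_ne_zero h0)) t2
    have e3 : eta L (y - z) = eta L ((y - z) * ω⁻¹) * eta L ω := by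
      rw [← eta_mul, inv_mul_cancel_right₀ h0]
    rw [e1, e2, he] at e3
    rcases neg_one_pow_eq_or ℂ (m + 1) with h | h <;> rw [h] at e3 <;> norm_num at e3
  · rw [Fintype.card_prod, hK, hL, sq]

lemma sum_pair {ω : L} (h0 : ω ≠ 0) (he : eta L ω = -1) (F : K → K → ℂ) :
    ∑ y : L, F (Algebra.trace K L y) (Algebra.trace K L (y * ω⁻¹)) = ∑ u, ∑ v, F u v := by
  rw [← Fintype.sum_prod_type']
  exact (pair_bij hm hK hL h2 h0 he).sum_comp (fun uv : K × K => F uv.1 uv.2)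

/-- weighted sums of the quadratic character over trace fibres -/
lemma sum_tr_eta (F : K → ℂ) :
    ∑ y : L, F (Algebra.trace K L y) * eta L y
      = (-1) ^ (m + 1) * ((2 * m + 1) * F 0 - ∑ u, F u) := by
  classical
  obtain ⟨ω, h0, he⟩ := eta_exists (L := L) h2
  set f : K → ℂ := fun u => ∑ y : L, if Algebra.trace K L y = u then eta L y else 0 with hf
  have hW : ∀ F : K → ℂ, ∑ y : L, F (Algebra.trace K L y) * eta L y = ∑ u, F u * f u := by
    intro F
    simp only [hf, Finset.mul_sum]
    rw [Finset.sum_comm]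
    refine Finset.sum_congr rfl fun y _ => ?_
    simp
  have hf0 : f 0 = (-1) ^ (m + 1) * (2 * m) := by
    have h1 : f 0 = ∑ y : L, ((if Algebra.trace K L y = 0 then (-1 : ℂ) ^ (m + 1) else 0)
        - if y = 0 then (-1 : ℂ) ^ (m + 1) else 0) := by
      refine Finset.sum_congr rfl fun y _ => ?_
      by_cases hy : y = 0
      · subst hy; simp [eta_zero]
      · by_cases ht : Algebra.trace K L y = 0
        · simp [ht, hy, eta_tr0 hm hK hL h2 hy ht]
        · simp [ht, hy]
    rw [h1, Finset.sum_sub_distrib,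
      sum_pair hm hK hL h2 h0 he (fun u _ => if u = 0 then (-1 : ℂ) ^ (m + 1) else 0)]
    simp [Finset.sum_ite_eq', hK]
    ring
  have hfu : ∀ u : K, u ≠ 0 → f u = f 1 := by
    intro u hu
    have hu' : algebraMap K L u ≠ 0 := by simpa using hu
    simp only [hf]
    rw [← Equiv.sum_comp (Equiv.mulLeft₀ (algebraMap K L u) hu')]
    refine Finset.sum_congr rfl fun y _ => ?_
    change (if Algebra.trace K L (algebraMap K L u * y) = u then eta L (algebraMap K L u * y) else 0) = _
    rw [eta_mul, eta_alg hm hK hL h2 hu, one_mul, ← Algebra.smul_def, map_smul, smul_eq_mul]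
    have : u * Algebra.trace K L y = u ↔ Algebra.trace K L y = 1 := by
      constructor
      · intro h; exact mul_left_cancel₀ hu (by rw [h, mul_one])
      · intro h; rw [h, mul_one]
    simp [this]
  have hS : ∀ F : K → ℂ, ∑ u, F u * f u = F 0 * f 0 + (∑ u, F u - F 0) * f 1 := by
    intro F
    rw [← Finset.add_sum_erase _ (fun u => F u * f u) (Finset.mem_univ 0),
      ← Finset.add_sum_erase _ F (Finset.mem_univ 0), add_sub_cancel_left, Finset.sum_mul]
    congr 1
    refine Finset.sum_congr rfl fun u hu => ?_
    rw [hfu u (Finset.ne_of_mem_erase hu)]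
  have h1 := hW (fun _ => 1)
  rw [hS] at h1
  simp only [one_mul, eta_sum h2, Finset.sum_const, Finset.card_univ, hK, nsmul_eq_mul, mul_one] at h1
  have hmC : (2 * (m : ℂ)) ≠ 0 := by
    simp; omega
  have hf1 : f 1 = -(-1) ^ (m + 1) := by
    apply mul_left_cancel₀ hmC
    rw [hf0] at h1
    push_cast at h1
    linear_combination -h1
  rw [hW, hS, hf0, hf1]
  ring

/-- the Gauss sum -/
lemma gauss {φ : AddChar K ℂ} (hφ : φ ≠ 1) :
    ∑ y : L, φ (Algebra.trace K L y) * eta L y = (-1) ^ (m + 1) * (2 * m + 1) := by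
  rw [sum_tr_eta hm hK hL h2 (fun u => φ u), AddChar.sum_eq_zero_of_ne_one hφ,
    AddChar.map_zero_eq_one]
  ring

lemma sum_U {φ : AddChar K ℂ} (hφ : φ ≠ 1) (c : L) :
    ∑ x : L, eta L x * φ (Algebra.trace K L (x * c))
      = eta L c * ((-1) ^ (m + 1) * (2 * m + 1)) := by
  by_cases hc : c = 0
  · subst hc; simp [eta_zero, eta_sum h2]
  · rw [← gauss hm hK hL h2 hφ, ← Equiv.sum_comp (Equiv.mulRight₀ c hc) (fun y => φ (Algebra.trace K L y) * eta L y), Finset.mul_sum]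
    refine Finset.sum_congr rfl fun x _ => ?_
    change _ = eta L c * (φ (Algebra.trace K L (x * c)) * eta L (x * c))
    rw [eta_mul]
    linear_combination -(eta L x * φ (Algebra.trace K L (x * c))) * eta_sq hc

open Classical in
lemma sum_T {φ : AddChar K ℂ} (hφ : φ ≠ 1) (c : L) :
    ∑ x : L, φ (Algebra.trace K L (x * c)) = if c = 0 then (2 * m + 1 : ℂ) ^ 2 else 0 := by
  by_cases hc : c = 0
  · subst hc; simp [hL]
  · obtain ⟨ω, h0, he⟩ := eta_exists (L := L) h2
    rw [if_neg hc, show ∑ x : L, φ (Algebra.trace K L (x * c)) = ∑ x : L, φ (Algebra.trace K L x) from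
        Equiv.sum_comp (Equiv.mulRight₀ c hc) (fun y => φ (Algebra.trace K L y)),
      sum_pair hm hK hL h2 h0 he (fun u _ => φ u)]
    simp [← Finset.mul_sum, AddChar.sum_eq_zero_of_ne_one hφ]

end ext

section comb
variable {L : Type} [Field L] [Fintype L]

/-- complex indicator of a set -/
def ind {α : Type} (E : Set α) (w : α) : ℂ := E.indicator (fun _ => (1 : ℂ)) w

open Classical in
lemma ind_eq {α : Type} (E : Set α) (w : α) : ind E w = if w ∈ E then 1 else 0 := by
  simp [ind, Set.indicator_apply]

lemma ind_mem {α : Type} {E : Set α} {w : α} (h : w ∈ E) : ind E w = 1 := by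
  simp [ind, h]

lemma ind_not {α : Type} {E : Set α} {w : α} (h : w ∉ E) : ind E w = 0 := by
  simp [ind, h]

open Classical in
lemma char_sum (E : Set (L × L)) (P D : L → ℂ) (t : ℂ)
    (h1 : ∀ x y : L, x ≠ 0 → ind E (x, x * y) = (P y + eta L x * D y) / 2)
    (h0 : ∀ z : L, ind E (0, z) = if z = 0 then 0 else (t ^ 2 + t * eta L z) / 2)
    (χ : L → ℂ) (a b : L) :
    ∑ w : L × L, ind E w * χ (a * w.1 + b * w.2) =
      (∑ y : L, (P y * (∑ x : L, χ (x * (a + b * y)) - χ 0)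
        + D y * ∑ x : L, eta L x * χ (x * (a + b * y)))) / 2
      + (t ^ 2 * (∑ x : L, χ (x * b) - χ 0) + t * ∑ x : L, eta L x * χ (x * b)) / 2 := by
  rw [Fintype.sum_prod_type, ← Finset.add_sum_erase _ _ (Finset.mem_univ (0 : L)), add_comm]
  have hA : ∀ g : L → ℂ, ∑ x ∈ Finset.univ.erase (0 : L), g x = ∑ x, g x - g 0 := by
    intro g
    rw [← Finset.add_sum_erase _ g (Finset.mem_univ (0 : L))]; ring
  congr 1
  · have : ∀ x ∈ Finset.univ.erase (0 : L),
        ∑ z : L, ind E (x, z) * χ (a * (x, z).1 + b * (x, z).2)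
        = ∑ y : L, (P y + eta L x * D y) / 2 * χ (x * (a + b * y)) := by
      intro x hx
      have hx0 := Finset.ne_of_mem_erase hx
      rw [← Equiv.sum_comp (Equiv.mulLeft₀ x hx0)]
      refine Finset.sum_congr rfl fun y _ => ?_
      change ind E (x, x * y) * χ (a * x + b * (x * y)) = _
      rw [h1 x y hx0]
      congr 2; ring
    rw [Finset.sum_congr rfl this, Finset.sum_comm, Finset.sum_div]
    refine Finset.sum_congr rfl fun y _ => ?_
    rw [hA]
    have h3 : ∀ x : L, (P y + eta L x * D y) / 2 * χ (x * (a + b * y))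
        = P y / 2 * χ (x * (a + b * y)) + D y / 2 * (eta L x * χ (x * (a + b * y))) := by
      intro x; ring
    simp only [h3, Finset.sum_add_distrib, ← Finset.mul_sum]
    rw [eta_zero, zero_mul (a + b * y)]
    ring
  · have : ∀ z : L, ind E (0, z) * χ (a * ((0 : L), z).1 + b * ((0 : L), z).2)
        = t ^ 2 / 2 * χ (z * b) + t / 2 * (eta L z * χ (z * b))
          - if z = 0 then t ^ 2 / 2 * χ 0 else 0 := by
      intro z
      rw [h0]
      by_cases hz : z = 0
      · subst hz; simp [eta_zero]
      · simp only [hz, if_false, mul_zero, zero_add, mul_comm b z]; ring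
    simp only [this, Finset.sum_sub_distrib, Finset.sum_add_distrib, ← Finset.mul_sum]
    simp
    ring

end comb

section main
variable {K L : Type} [Field K] [Fintype K] [Field L] [Fintype L] [Algebra K L]
variable {m : ℕ} (hm : 0 < m) (hK : Fintype.card K = 2 * m + 1)
  (hL : Fintype.card L = (2 * m + 1) ^ 2) (h2 : ringChar L ≠ 2)

lemma sum_s (hK : Fintype.card K = 2 * m + 1) (h2 : ringChar K ≠ 2) :
    ∑ u : K, ind (sqSet K) u = m := by
  classical
  have h : ∀ u : K, ind (sqSet K) u = (1 + eta K u) / 2 - if u = 0 then 1 / 2 else 0 := by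
    intro u
    by_cases hu : u = 0
    · subst hu
      rw [ind_not]
      · simp [eta_zero]
      · rintro ⟨z, hz, h⟩
        exact hz (pow_eq_zero_iff (two_ne_zero) |>.1 h.symm)
    · simp only [hu, if_false, sub_zero]
      by_cases hs : u ∈ sqSet K
      · rw [ind_mem hs]
        obtain ⟨z, hz, rfl⟩ := hs
        rw [eta_pow, sq, eta_sq hz]; norm_num
      · rw [ind_not hs]
        rcases eta_dich hu with h | h
        · exfalso
          apply hs
          have : quadraticChar K u = 1 := by
            unfold eta at h
            exact_mod_cast h
          rw [quadraticChar_one_iff_isSquare hu] at this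
          obtain ⟨z, hz⟩ := this
          exact ⟨z, by rintro rfl; simp at hz; exact hu hz, by rw [hz, sq]⟩
        · rw [h]; norm_num
  simp only [h, Finset.sum_sub_distrib, ← Finset.sum_div, Finset.sum_add_distrib, eta_sum h2]
  simp [hK]
  ring

/-- indicator of X -/
def fA (K : Type) {L : Type} [Field K] [Field L] [Algebra K L] (y : L) : ℂ :=
  ind (sqSet K) (Algebra.trace K L y)

/-- indicator of the second set -/
def fB (K : Type) {L : Type} [Field K] [Field L] [Algebra K L] (ω y : L) : ℂ :=
  ind (sqSet K) (Algebra.trace K L (y * ω⁻¹))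

include hm hK hL h2

lemma sum_fA_eta (h2K : ringChar K ≠ 2) (c : L) :
    ∑ y : L, fA K y * eta L (y + c) = (-1) ^ (m + 1) * ((2 * m + 1) * fA K (-c) - m) := by
  have h := sum_tr_eta hm hK hL h2 (fun u : K => ind (sqSet K) (u - Algebra.trace K L c))
  rw [← Equiv.sum_comp (Equiv.addRight c)] at h
  have e : ∑ u : K, ind (sqSet K) (u - Algebra.trace K L c) = m := by
    rw [← sum_s hK h2K]
    exact Equiv.sum_comp (Equiv.subRight (Algebra.trace K L c)) (fun u => ind (sqSet K) u)
  rw [e] at h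
  simpa [fA] using h

lemma sum_fB_eta (h2K : ringChar K ≠ 2) {ω : L} (h0 : ω ≠ 0) (he : eta L ω = -1) (c : L) :
    ∑ y : L, fB K ω y * eta L (y + c) = -(-1) ^ (m + 1) * ((2 * m + 1) * fB K ω (-c) - m) := by
  have h := sum_fA_eta hm hK hL h2 h2K (c * ω⁻¹)
  rw [← Equiv.sum_comp (Equiv.mulRight₀ ω h0)]
  have : ∀ y : L, fB K ω (Equiv.mulRight₀ ω h0 y) * eta L (Equiv.mulRight₀ ω h0 y + c)
      = -(fA K y * eta L (y + c * ω⁻¹)) := by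
    intro y
    change fB K ω (y * ω) * eta L (y * ω + c) = _
    have e1 : y * ω + c = (y + c * ω⁻¹) * ω := by field_simp
    rw [e1, eta_mul, he, fB, mul_inv_cancel_right₀ h0, fA]
    ring
  simp only [this, Finset.sum_neg_distrib, h]
  rw [fB, fA, neg_mul c]
  ring

lemma sum_fA (h2K : ringChar K ≠ 2) : ∑ y : L, fA K y = (2 * m + 1) * m := by
  obtain ⟨ω, h0, he⟩ := eta_exists (L := L) h2
  unfold fA
  rw [sum_pair hm hK hL h2 h0 he (fun u _ => ind (sqSet K) u)]
  simp [← Finset.mul_sum, sum_s hK h2K, hK]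

lemma sum_fB (h2K : ringChar K ≠ 2) {ω : L} (h0 : ω ≠ 0) (he : eta L ω = -1) :
    ∑ y : L, fB K ω y = (2 * m + 1) * m := by
  unfold fB
  rw [sum_pair hm hK hL h2 h0 he (fun _ v => ind (sqSet K) v)]
  simp [sum_s hK h2K, hK]

lemma sum_fAB (h2K : ringChar K ≠ 2) {ω : L} (h0 : ω ≠ 0) (he : eta L ω = -1) :
    ∑ y : L, fA K y * fB K ω y = m * m := by
  unfold fA fB
  rw [sum_pair hm hK hL h2 h0 he (fun u v => ind (sqSet K) u * ind (sqSet K) v)]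
  simp [← Finset.mul_sum, sum_s hK h2K, ← Finset.sum_mul]

open Classical in
/-- general evaluation -/
lemma eval {φ : AddChar K ℂ} (hφ : φ ≠ 1) (E : Set (L × L)) (P D : L → ℂ) (t : ℂ)
    (h1 : ∀ x y : L, x ≠ 0 → ind E (x, x * y) = (P y + eta L x * D y) / 2)
    (h0 : ∀ z : L, ind E (0, z) = if z = 0 then 0 else (t ^ 2 + t * eta L z) / 2)
    (a b : L) :
    ∑ w : L × L, ind E w * φ (Algebra.trace K L (a * w.1 + b * w.2)) =
      (∑ y : L, (P y * ((if a + b * y = 0 then (2 * m + 1 : ℂ) ^ 2 else 0) - 1)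
        + D y * (eta L (a + b * y) * ((-1) ^ (m + 1) * (2 * m + 1))))) / 2
      + (t ^ 2 * ((if b = 0 then (2 * m + 1 : ℂ) ^ 2 else 0) - 1)
        + t * (eta L b * ((-1) ^ (m + 1) * (2 * m + 1)))) / 2 := by
  rw [char_sum E P D t h1 h0 (fun c => φ (Algebra.trace K L c)) a b]
  simp only [sum_T hm hK hL h2 hφ, sum_U hm hK hL h2 hφ, map_zero, AddChar.map_zero_eq_one]

open Classical in
/-- evaluation at `b = 0` -/
lemma eval_b0 {φ : AddChar K ℂ} (hφ : φ ≠ 1) (E : Set (L × L)) (P D : L → ℂ) (t : ℂ)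
    (h1 : ∀ x y : L, x ≠ 0 → ind E (x, x * y) = (P y + eta L x * D y) / 2)
    (h0 : ∀ z : L, ind E (0, z) = if z = 0 then 0 else (t ^ 2 + t * eta L z) / 2)
    {a : L} (ha : a ≠ 0) :
    ∑ w : L × L, ind E w * φ (Algebra.trace K L (a * w.1 + 0 * w.2)) =
      (-(∑ y, P y) + (∑ y, D y) * (eta L a * ((-1) ^ (m + 1) * (2 * m + 1)))) / 2
      + (t ^ 2 * ((2 * m + 1 : ℂ) ^ 2 - 1)) / 2 := by
  rw [eval hm hK hL h2 hφ E P D t h1 h0 a 0]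
  simp only [zero_mul, add_zero, ha, if_false, if_true, eta_zero, mul_zero, Finset.sum_add_distrib,
    ← Finset.sum_mul]
  ring

open Classical in
lemma eval_00 {φ : AddChar K ℂ} (hφ : φ ≠ 1) (E : Set (L × L)) (P D : L → ℂ) (t : ℂ)
    (h1 : ∀ x y : L, x ≠ 0 → ind E (x, x * y) = (P y + eta L x * D y) / 2)
    (h0 : ∀ z : L, ind E (0, z) = if z = 0 then 0 else (t ^ 2 + t * eta L z) / 2) :
    ∑ w : L × L, ind E w =
      ((∑ y, P y) + t ^ 2) * ((2 * m + 1 : ℂ) ^ 2 - 1) / 2 := by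
  have := eval hm hK hL h2 hφ E P D t h1 h0 0 0
  simp only [zero_mul, add_zero, map_zero, AddChar.map_zero_eq_one, mul_one, if_true, eta_zero,
    mul_zero, ← Finset.sum_mul] at this
  rw [this]
  ring

open Classical in
lemma eval_b {φ : AddChar K ℂ} (hφ : φ ≠ 1) (E : Set (L × L)) (P D : L → ℂ) (t : ℂ)
    (h1 : ∀ x y : L, x ≠ 0 → ind E (x, x * y) = (P y + eta L x * D y) / 2)
    (h0 : ∀ z : L, ind E (0, z) = if z = 0 then 0 else (t ^ 2 + t * eta L z) / 2)
    (a : L) {b : L} (hb : b ≠ 0) :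
    ∑ w : L × L, ind E w * φ (Algebra.trace K L (a * w.1 + b * w.2)) =
      ((2 * m + 1 : ℂ) ^ 2 * P (-(a * b⁻¹)) - (∑ y, P y)
        + (∑ y, D y * eta L (y + a * b⁻¹)) * (eta L b * ((-1) ^ (m + 1) * (2 * m + 1)))) / 2
      + (-t ^ 2 + t * (eta L b * ((-1) ^ (m + 1) * (2 * m + 1)))) / 2 := by
  rw [eval hm hK hL h2 hφ E P D t h1 h0 a b]
  have e1 : ∀ y : L, a + b * y = 0 ↔ -(a * b⁻¹) = y := by
    intro y
    constructor
    · intro h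
      have : y = -a * b⁻¹ := by
        field_simp; linear_combination h
      rw [this]; ring
    · rintro rfl; field_simp; ring
  have e2 : ∀ y : L, eta L (a + b * y) = eta L b * eta L (y + a * b⁻¹) := by
    intro y; rw [← eta_mul]; congr 1; field_simp; ring
  have e3 : ∀ y : L, (P y * ((if a + b * y = 0 then (2 * m + 1 : ℂ) ^ 2 else 0) - 1)
        + D y * (eta L (a + b * y) * ((-1) ^ (m + 1) * (2 * m + 1))))
      = (if -(a * b⁻¹) = y then (2 * m + 1 : ℂ) ^ 2 * P y else 0) - P y
        + D y * eta L (y + a * b⁻¹) * (eta L b * ((-1) ^ (m + 1) * (2 * m + 1))) := by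
    intro y
    rw [e2]
    by_cases h : -(a * b⁻¹) = y
    · rw [if_pos ((e1 y).2 h), if_pos h]; ring
    · rw [if_neg (mt (e1 y).1 h), if_neg h]; ring
  simp only [e3, Finset.sum_add_distrib, Finset.sum_sub_distrib, ← Finset.sum_mul, hb, if_false]
  rw [Finset.sum_ite_eq]
  simp

omit hm hK hL h2 [Fintype K] [Fintype L] in
lemma fA_dich (y : L) : fA K y = 0 ∨ fA K y = 1 := by
  unfold fA
  by_cases h : Algebra.trace K L y ∈ sqSet K
  · right; exact ind_mem h
  · left; exact ind_not h

omit hm hK hL h2 [Fintype K] [Fintype L] in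
lemma fB_dich (ω y : L) : fB K ω y = 0 ∨ fB K ω y = 1 := by
  unfold fB
  by_cases h : Algebra.trace K L (y * ω⁻¹) ∈ sqSet K
  · right; exact ind_mem h
  · left; exact ind_not h

open Classical in
/-- the two even classes -/
lemma value_even (h2K : ringChar K ≠ 2) {ω : L} (hω : ω ≠ 0) (hew : eta L ω = -1)
    {φ : AddChar K ℂ} (hφ : φ ≠ 1) (E : Set (L × L)) (e : ℂ) (he : e = 1 ∨ e = -1)
    (h1 : ∀ x y : L, x ≠ 0 → ind E (x, x * y)
      = ((fA K y + fB K ω y - 2 * (fA K y * fB K ω y)) + eta L x * (e * (fA K y - fB K ω y))) / 2)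
    (h0 : ∀ z : L, ind E (0, z) = if z = 0 then 0 else
      ((-e * (-1) ^ (m + 1)) ^ 2 + (-e * (-1) ^ (m + 1)) * eta L z) / 2) :
    (∑ w : L × L, ind E w = ((2 * m + 1 : ℂ) ^ 4 - 1) / 4) ∧ ∀ a b : L, (a, b) ≠ ((0 : L), (0 : L)) →
    (∑ w : L × L, ind E w * φ (Algebra.trace K L (a * w.1 + b * w.2))
      = ((2 * m + 1 : ℂ) ^ 2 - 1) / 4 ∨
     ∑ w : L × L, ind E w * φ (Algebra.trace K L (a * w.1 + b * w.2))
      = (-3 * (2 * m + 1 : ℂ) ^ 2 - 1) / 4) := by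
  have sP : ∑ y : L, (fA K y + fB K ω y - 2 * (fA K y * fB K ω y))
      = 2 * (2 * m + 1) * m - 2 * (m * m) := by
    simp only [Finset.sum_add_distrib, Finset.sum_sub_distrib, ← Finset.mul_sum,
      sum_fA hm hK hL h2 h2K, sum_fB hm hK hL h2 h2K hω hew, sum_fAB hm hK hL h2 h2K hω hew]
    ring
  have sD : ∑ y : L, e * (fA K y - fB K ω y) = 0 := by
    simp only [Finset.sum_sub_distrib, ← Finset.mul_sum,
      sum_fA hm hK hL h2 h2K, sum_fB hm hK hL h2 h2K hω hew]
    ring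
  have sDe : ∀ c, ∑ y : L, e * (fA K y - fB K ω y) * eta L (y + c)
      = e * ((-1) ^ (m + 1) * ((2 * m + 1) * (fA K (-c) + fB K ω (-c)) - 2 * m)) := by
    intro c
    simp only [mul_assoc, ← Finset.mul_sum, sub_mul, Finset.sum_sub_distrib,
      sum_fA_eta hm hK hL h2 h2K, sum_fB_eta hm hK hL h2 h2K hω hew]
    ring
  have hk : ((-1 : ℂ) ^ (m + 1)) ^ 2 = 1 := by rw [← pow_mul, mul_comm, pow_mul]; simp
  have he2 : e ^ 2 = 1 := by rcases he with h | h <;> rw [h] <;> norm_num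
  have ht : (-e * (-1) ^ (m + 1)) ^ 2 = 1 := by rw [mul_pow, neg_sq, he2, hk, one_mul]
  constructor
  · rw [eval_00 hm hK hL h2 hφ E _ _ _ h1 h0, sP, ht]; ring
  intro a b hab
  by_cases hb : b = 0
  · subst hb
    have ha : a ≠ 0 := by rintro rfl; exact hab rfl
    left
    rw [eval_b0 hm hK hL h2 hφ E _ _ _ h1 h0 ha, sP, sD, ht]; ring
  · rw [eval_b hm hK hL h2 hφ E _ _ _ h1 h0 a hb, sP, sDe, ht]
    generalize (-1 : ℂ) ^ (m + 1) = k at hk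
    generalize -(a * b⁻¹) = c
    have hk' : k = 1 ∨ k = -1 := sq_eq_one_iff.1 hk
    rcases hk' with rfl | rfl <;> rcases he with rfl | rfl <;>
    rcases eta_dich hb with h | h <;> rcases fA_dich (K := K) c with hA | hA <;>
    rcases fB_dich (K := K) ω c with hB | hB <;> rw [h, hA, hB] <;>
    first
    | (left; ring1)
    | (right; ring1)

open Classical in
/-- the two odd classes -/
lemma value_odd (h2K : ringChar K ≠ 2) {ω : L} (hω : ω ≠ 0) (hew : eta L ω = -1)
    {φ : AddChar K ℂ} (hφ : φ ≠ 1) (E : Set (L × L)) (e : ℂ) (he : e = 1 ∨ e = -1)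
    (h1 : ∀ x y : L, x ≠ 0 → ind E (x, x * y)
      = ((1 - (fA K y + fB K ω y - 2 * (fA K y * fB K ω y)))
        + eta L x * (e * (fA K y + fB K ω y - 1))) / 2)
    (h0 : ∀ z : L, ind E (0, z) = 0) :
    (∑ w : L × L, ind E w = ((2 * m + 1 : ℂ) ^ 4 - 1) / 4) ∧ ∀ a b : L, (a, b) ≠ ((0 : L), (0 : L)) →
    (∑ w : L × L, ind E w * φ (Algebra.trace K L (a * w.1 + b * w.2))
      = ((2 * m + 1 : ℂ) ^ 2 - 1) / 4 ∨
     ∑ w : L × L, ind E w * φ (Algebra.trace K L (a * w.1 + b * w.2))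
      = (-3 * (2 * m + 1 : ℂ) ^ 2 - 1) / 4) := by
  have s1 : ∑ y : L, (1 : ℂ) = (2 * m + 1) ^ 2 := by simp [hL]
  have sP : ∑ y : L, (1 - (fA K y + fB K ω y - 2 * (fA K y * fB K ω y)))
      = (2 * m + 1) ^ 2 - (2 * (2 * m + 1) * m - 2 * (m * m)) := by
    simp only [Finset.sum_add_distrib, Finset.sum_sub_distrib, ← Finset.mul_sum, s1,
      sum_fA hm hK hL h2 h2K, sum_fB hm hK hL h2 h2K hω hew, sum_fAB hm hK hL h2 h2K hω hew]
    ring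
  have sD : ∑ y : L, e * (fA K y + fB K ω y - 1) = - e * (2 * m + 1) := by
    simp only [Finset.sum_sub_distrib, Finset.sum_add_distrib, ← Finset.mul_sum, s1,
      sum_fA hm hK hL h2 h2K, sum_fB hm hK hL h2 h2K hω hew]
    ring
  have sDe : ∀ c, ∑ y : L, e * (fA K y + fB K ω y - 1) * eta L (y + c)
      = e * ((-1) ^ (m + 1) * ((2 * m + 1) * (fA K (-c) - fB K ω (-c)))) := by
    intro c
    have s0 : ∑ y : L, eta L (y + c) = 0 := by
      rw [← eta_sum h2]; exact Equiv.sum_comp (Equiv.addRight c) (fun y => eta L y)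
    simp only [mul_assoc, ← Finset.mul_sum, sub_mul, add_mul, one_mul, Finset.sum_sub_distrib,
      Finset.sum_add_distrib, s0,
      sum_fA_eta hm hK hL h2 h2K, sum_fB_eta hm hK hL h2 h2K hω hew]
    ring
  have hk : ((-1 : ℂ) ^ (m + 1)) ^ 2 = 1 := by rw [← pow_mul, mul_comm, pow_mul]; simp
  have h0' : ∀ z : L, ind E (0, z) = if z = 0 then 0 else
      ((0 : ℂ) ^ 2 + 0 * eta L z) / 2 := by
    intro z; rw [h0]; simp
  constructor
  · rw [eval_00 hm hK hL h2 hφ E _ _ _ h1 h0', sP]; ring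
  intro a b hab
  have hk' : (-1 : ℂ) ^ (m + 1) = 1 ∨ (-1 : ℂ) ^ (m + 1) = -1 := neg_one_pow_eq_or ℂ (m + 1)
  by_cases hb : b = 0
  · subst hb
    have ha : a ≠ 0 := by rintro rfl; exact hab rfl
    rw [eval_b0 hm hK hL h2 hφ E _ _ _ h1 h0' ha, sP, sD]
    generalize (-1 : ℂ) ^ (m + 1) = k at hk'
    rcases hk' with rfl | rfl <;> rcases he with rfl | rfl <;>
    rcases eta_dich ha with h | h <;> rw [h] <;>
    first
    | (left; ring1)
    | (right; ring1)
  · rw [eval_b hm hK hL h2 hφ E _ _ _ h1 h0' a hb, sP, sDe]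
    generalize (-1 : ℂ) ^ (m + 1) = k at hk'
    generalize -(a * b⁻¹) = c
    rcases hk' with rfl | rfl <;> rcases he with rfl | rfl <;>
    rcases eta_dich hb with h | h <;> rcases fA_dich (K := K) c with hA | hA <;>
    rcases fB_dich (K := K) ω c with hB | hB <;> rw [h, hA, hB] <;>
    first
    | (left; ring1)
    | (right; ring1)

end main

section final

lemma psi_exists (p : ℕ) (hp : p.Prime) (K L : Type) [Field K] [Fintype K] [Field L] [Fintype L]
    [Algebra K L] [CharP L p] :
    ∃ φ : AddChar K ℂ, φ ≠ 1 ∧ ∀ x : L, psiL p L x = φ (Algebra.trace K L x) := by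
  have : Fact p.Prime := ⟨hp⟩
  have : NeZero p := ⟨hp.ne_zero⟩
  have : CharP K p := RingHom.charP (algebraMap K L) (algebraMap K L).injective p
  let a1 : Algebra (ZMod p) L := ZMod.algebra L p
  let a2 : Algebra (ZMod p) K := ZMod.algebra K p
  have : IsScalarTower (ZMod p) K L := IsScalarTower.of_algebraMap_eq' (RingHom.ext_zmod _ _)
  refine ⟨(ZMod.stdAddChar (N := p)).compAddMonoidHom (Algebra.trace (ZMod p) K).toAddMonoidHom,
    ?_, ?_⟩
  · rw [AddChar.ne_one_iff]
    obtain ⟨x, hx⟩ := Algebra.trace_surjective (ZMod p) K 1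
    refine ⟨x, ?_⟩
    change ZMod.stdAddChar (Algebra.trace (ZMod p) K x) ≠ 1
    rw [hx, ← AddChar.map_zero_eq_one (ZMod.stdAddChar (N := p))]
    exact fun h => one_ne_zero (ZMod.injective_stdAddChar h)
  · intro x
    change zetaP p ^ (Algebra.trace (ZMod p) L x).val
      = ZMod.stdAddChar (Algebra.trace (ZMod p) K (Algebra.trace K L x))
    rw [Algebra.trace_trace]
    generalize Algebra.trace (ZMod p) L x = j
    have h := ZMod.stdAddChar_coe (N := p) (j.val : ℤ)
    have hj : (((j.val : ℤ)) : ZMod p) = j := by simp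
    rw [hj] at h
    rw [h, zetaP, ← Complex.exp_nat_mul]
    congr 1
    push_cast
    ring

lemma psiSum_eq (p : ℕ) {K L : Type} [Field K] [Field L] [Fintype L]
    [Algebra K L] [CharP L p] (φ : AddChar K ℂ)
    (h : ∀ x : L, psiL p L x = φ (Algebra.trace K L x)) (a b : L) (E : Set (L × L)) :
    psiSum p L a b E = ∑ w : L × L, ind E w * φ (Algebra.trace K L (a * w.1 + b * w.2)) := by
  classical
  unfold psiSum
  rw [finsum_mem_def, finsum_eq_sum_of_fintype]
  refine Finset.sum_congr rfl fun w _ => ?_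
  rw [ind_eq, Set.indicator_apply, h]
  split_ifs <;> simp

lemma ncard_eq {α : Type} [Fintype α] (E : Set α) : (E.ncard : ℂ) = ∑ w : α, ind E w := by
  classical
  simp only [ind_eq]
  rw [Finset.sum_boole, Set.ncard_eq_toFinset_card']
  congr 2
  ext; simp

lemma typeQ_of {p q m : ℕ} (hq : q = 2 * m + 1) {K L : Type} [Field K] [Field L] [Fintype L]
    [Algebra K L] [CharP L p] {φ : AddChar K ℂ}
    (h : ∀ x : L, psiL p L x = φ (Algebra.trace K L x)) {E : Set (L × L)}
    (H : (∑ w : L × L, ind E w = ((2 * m + 1 : ℂ) ^ 4 - 1) / 4) ∧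
      ∀ a b : L, (a, b) ≠ ((0 : L), (0 : L)) →
      (∑ w : L × L, ind E w * φ (Algebra.trace K L (a * w.1 + b * w.2))
        = ((2 * m + 1 : ℂ) ^ 2 - 1) / 4 ∨
       ∑ w : L × L, ind E w * φ (Algebra.trace K L (a * w.1 + b * w.2))
        = (-3 * (2 * m + 1 : ℂ) ^ 2 - 1) / 4)) : IsTypeQ p q L E := by
  have hqc : (q : ℂ) = 2 * m + 1 := by rw [hq]; push_cast; ring
  constructor
  · have h1 := H.1
    rw [← ncard_eq, ← hqc] at h1
    have h2 : ((4 * E.ncard + 1 : ℕ) : ℂ) = ((q ^ 4 : ℕ) : ℂ) := by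
      push_cast; rw [h1]; ring
    have h3 : 4 * E.ncard + 1 = q ^ 4 := by exact_mod_cast h2
    omega
  · intro a b hab
    rw [psiSum_eq p φ h, hqc]
    exact H.2 a b hab

section mem
variable {L : Type} [Field L] [Fintype L] (h2 : ringChar L ≠ 2) {ω : L} (hω : IsPrim L ω)
include h2 hω

lemma mem_main (i : ℕ) (Y : Set L) {x : L} (hx : x ≠ 0) (y : L) :
    (x, x * y) ∈ {w : L × L | ∃ x ∈ cyc L ω 2 i, ∃ y ∈ Y, w = (x, x * y)} ↔
      eta L x = (-1) ^ i ∧ y ∈ Y := by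
  constructor
  · rintro ⟨x', hx', y', hy', h⟩
    simp only [Prod.mk.injEq] at h
    obtain ⟨rfl, h⟩ := h
    rw [mul_left_cancel₀ hx h]
    exact ⟨((mem_cyc h2 hω i x).1 hx').2, hy'⟩
  · rintro ⟨h, hy⟩
    exact ⟨x, (mem_cyc h2 hω i x).2 ⟨hx, h⟩, y, hy, rfl⟩

lemma mem_main0 (i : ℕ) (Y : Set L) (z : L) :
    ((0 : L), z) ∈ {w : L × L | ∃ x ∈ cyc L ω 2 i, ∃ y ∈ Y, w = (x, x * y)} ↔ False := by
  constructor
  · rintro ⟨x', hx', y', hy', h⟩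
    simp only [Prod.mk.injEq] at h
    exact ((mem_cyc h2 hω i x').1 hx').1 h.1.symm
  · exact False.elim

omit h2 hω [Fintype L] in
lemma mem_inf (i : ℕ) {x : L} (hx : x ≠ 0) (z : L) :
    (x, z) ∈ {w : L × L | ∃ x ∈ cyc L ω 2 i, w = ((0 : L), x)} ↔ False := by
  constructor
  · rintro ⟨x', hx', h⟩
    simp only [Prod.mk.injEq] at h
    exact hx h.1
  · exact False.elim

lemma mem_inf0 (i : ℕ) (z : L) :
    ((0 : L), z) ∈ {w : L × L | ∃ x ∈ cyc L ω 2 i, w = ((0 : L), x)} ↔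
      z ≠ 0 ∧ eta L z = (-1) ^ i := by
  rw [← mem_cyc h2 hω i z]
  constructor
  · rintro ⟨x', hx', h⟩
    simp only [Prod.mk.injEq] at h
    rw [h.2]; exact hx'
  · intro h; exact ⟨z, h, rfl⟩

end mem

lemma prod_cases {L : Type} [Field L] {p : L × L → Prop}
    (h1 : ∀ x y : L, x ≠ 0 → p (x, x * y)) (h0 : ∀ z : L, p (0, z)) (w : L × L) : p w := by
  obtain ⟨x, z⟩ := w
  by_cases hx : x = 0
  · subst hx; exact h0 z
  · have := h1 x (x⁻¹ * z) hx
    rwa [mul_inv_cancel_left₀ hx] at this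

lemma ind_inf {L : Type} [Field L] [Fintype L] [DecidableEq L] {E : Set (L × L)} {t : ℂ} (ht : t = 1 ∨ t = -1)
    (h : ∀ z : L, ((0 : L), z) ∈ E ↔ z ≠ 0 ∧ eta L z = t) (z : L) :
    ind E (0, z) = if z = 0 then 0 else (t ^ 2 + t * eta L z) / 2 := by
  by_cases hz : z = 0
  · rw [ind_not, if_pos hz]
    rw [h]; simp [hz]
  · rw [if_neg hz]
    rcases ht with rfl | rfl <;> rcases eta_dich hz with he | he
    · rw [ind_mem ((h z).2 ⟨hz, he⟩), he]; norm_num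
    · rw [ind_not, he]
      · norm_num
      · rw [h, he]; norm_num
    · rw [ind_not, he]
      · norm_num
      · rw [h, he]; norm_num
    · rw [ind_mem ((h z).2 ⟨hz, he⟩), he]; norm_num

lemma ind_main {L : Type} [Field L] [Fintype L] {E : Set (L × L)} {Y Z : Set L}
    (h : ∀ x y : L, x ≠ 0 → ((x, x * y) ∈ E ↔ (eta L x = 1 ∧ y ∈ Y) ∨ (eta L x = -1 ∧ y ∈ Z)))
    (x y : L) (hx : x ≠ 0) :
    ind E (x, x * y) = ((ind Y y + ind Z y) + eta L x * (ind Y y - ind Z y)) / 2 := by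
  classical
  rw [ind_eq E, h x y hx]
  rcases eta_dich hx with he | he
  · rw [he, ind_eq Y]
    norm_num
  · rw [he, ind_eq Z]
    norm_num
    ring

lemma bool_aux {a b P Q : Prop} (h : a ∨ b) :
    (((a ∧ P) ∨ (b ∧ Q)) ∨ ((a ∧ Q) ∨ (b ∧ P))) ↔ (P ∨ Q) := by
  tauto

end final

end ChenAux

open ChenAux

/-- Chen's construction: the four sets `C₀, C₁, C₂, C₃` are of type Q, pairwise
disjoint, and fit the spread `{K_y} ∪ {K_∞}`. -/
theorem chen_typeQ_construction
    (p s q : ℕ) (hp : p.Prime) (hpodd : p ≠ 2) (hs : 0 < s) (hq : q = p ^ s)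
    (K L : Type) [Field K] [Fintype K] [Field L] [Fintype L] [Algebra K L] [CharP L p]
    (hK : Fintype.card K = q) (hL : Fintype.card L = q ^ 2)
    (ω : L) (hω : IsPrim L ω)
    (X X' X₁ X₂ X₃ X₄ : Set L)
    (hX : X = {x : L | Algebra.trace K L x ∈ sqSet K})
    (hX' : X' = {y : L | ∃ x : L, Algebra.trace K L x ∈ sqSet K ∧ y = x * ω})
    (hX₁ : X₁ = X \ (X ∩ X')) (hX₂ : X₂ = X' \ (X ∩ X'))
    (hX₃ : X₃ = X ∩ X') (hX₄ : X₄ = Set.univ \ (X₁ ∪ X₂ ∪ X₃))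
    (τ : ℕ) (hτ : τ = if q % 4 = 1 then 0 else 1)
    (C₀ C₁ C₂ C₃ : Set (L × L))
    (hC₀ : C₀ = {w | ∃ x ∈ cyc L ω 2 0, ∃ y ∈ X₁, w = (x, x * y)} ∪
      {w | ∃ x ∈ cyc L ω 2 1, ∃ y ∈ X₂, w = (x, x * y)} ∪
      {w | ∃ x ∈ cyc L ω 2 τ, w = ((0 : L), x)})
    (hC₁ : C₁ = {w | ∃ x ∈ cyc L ω 2 0, ∃ y ∈ X₃, w = (x, x * y)} ∪
      {w | ∃ x ∈ cyc L ω 2 1, ∃ y ∈ X₄, w = (x, x * y)})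
    (hC₂ : C₂ = {w | ∃ x ∈ cyc L ω 2 1, ∃ y ∈ X₁, w = (x, x * y)} ∪
      {w | ∃ x ∈ cyc L ω 2 0, ∃ y ∈ X₂, w = (x, x * y)} ∪
      {w | ∃ x ∈ cyc L ω 2 (τ + 1), w = ((0 : L), x)})
    (hC₃ : C₃ = {w | ∃ x ∈ cyc L ω 2 1, ∃ y ∈ X₃, w = (x, x * y)} ∪
      {w | ∃ x ∈ cyc L ω 2 0, ∃ y ∈ X₄, w = (x, x * y)})
    (Ky : L → Set (L × L)) (hKy : ∀ y, Ky y = {w | ∃ x : L, w = (x, x * y)})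
    (Kinf : Set (L × L)) (hKinf : Kinf = {w | ∃ x : L, w = ((0 : L), x)}) :
    (IsTypeQ p q L C₀ ∧ IsTypeQ p q L C₁ ∧ IsTypeQ p q L C₂ ∧ IsTypeQ p q L C₃) ∧
    (Disjoint C₀ C₁ ∧ Disjoint C₀ C₂ ∧ Disjoint C₀ C₃ ∧
      Disjoint C₁ C₂ ∧ Disjoint C₁ C₃ ∧ Disjoint C₂ C₃) ∧
    C₀ ∪ C₂ ∪ {((0 : L), (0 : L))} = (⋃ y ∈ X₁ ∪ X₂, Ky y) ∪ Kinf ∧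
    C₁ ∪ C₃ ∪ {((0 : L), (0 : L))} = ⋃ y ∈ X₃ ∪ X₄, Ky y := by
  classical
  have : Fact p.Prime := ⟨hp⟩
  have h2 : ringChar L ≠ 2 := by
    rw [ringChar.eq L p]; exact hpodd
  have : CharP K p := RingHom.charP (algebraMap K L) (algebraMap K L).injective p
  have h2K : ringChar K ≠ 2 := by
    rw [ringChar.eq K p]; exact hpodd
  have hqodd : Odd q := by
    rw [hq]; exact (hp.odd_of_ne_two hpodd).pow
  obtain ⟨m, hqm⟩ := hqodd
  have hq1 : 1 < q := by rw [hq]; exact Nat.one_lt_pow hs.ne' hp.one_lt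
  have hm : 0 < m := by omega
  have hK' : Fintype.card K = 2 * m + 1 := by rw [hK, hqm]
  have hL' : Fintype.card L = (2 * m + 1) ^ 2 := by rw [hL, hqm]
  obtain ⟨h0, hew⟩ := eta_prim h2 hω
  obtain ⟨φ, hφ, hψ⟩ := psi_exists p hp K L
  -- indicators
  have hfA : ∀ y, fA K y = ind X y := by
    intro y
    rw [fA, ind_eq, ind_eq, hX]; rfl
  have hfB : ∀ y, fB K ω y = ind X' y := by
    intro y
    have : y ∈ X' ↔ Algebra.trace K L (y * ω⁻¹) ∈ sqSet K := by
      rw [hX']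
      constructor
      · rintro ⟨x, hx, rfl⟩; rwa [mul_inv_cancel_right₀ h0]
      · intro h; exact ⟨y * ω⁻¹, h, by rw [inv_mul_cancel_right₀ h0]⟩
    rw [fB, ind_eq, ind_eq, this]
  have i1 : ∀ y, ind X₁ y = fA K y - fA K y * fB K ω y := by
    intro y; rw [hfA, hfB, hX₁]
    by_cases hA : y ∈ X <;> by_cases hB : y ∈ X' <;> simp [ind_eq, hA, hB]
  have i2 : ∀ y, ind X₂ y = fB K ω y - fA K y * fB K ω y := by
    intro y; rw [hfA, hfB, hX₂]
    by_cases hA : y ∈ X <;> by_cases hB : y ∈ X' <;> simp [ind_eq, hA, hB]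
  have i3 : ∀ y, ind X₃ y = fA K y * fB K ω y := by
    intro y; rw [hfA, hfB, hX₃]
    by_cases hA : y ∈ X <;> by_cases hB : y ∈ X' <;> simp [ind_eq, hA, hB]
  have i4 : ∀ y, ind X₄ y = 1 - fA K y - fB K ω y + fA K y * fB K ω y := by
    intro y; rw [hfA, hfB, hX₄, hX₁, hX₂, hX₃]
    by_cases hA : y ∈ X <;> by_cases hB : y ∈ X' <;> simp [ind_eq, hA, hB]
  -- the sign
  have hτs : (-1 : ℂ) ^ τ = -(-1) ^ (m + 1) := by
    rcases Nat.even_or_odd m with h | h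
    · have : q % 4 = 1 := by obtain ⟨k, hk⟩ := h; omega
      rw [hτ, if_pos this, h.add_one.neg_one_pow]; norm_num
    · have : ¬ q % 4 = 1 := by obtain ⟨k, hk⟩ := h; omega
      rw [hτ, if_neg this, h.add_one.neg_one_pow]; norm_num
  -- membership
  have M0 : ∀ x y : L, x ≠ 0 →
      ((x, x * y) ∈ C₀ ↔ (eta L x = 1 ∧ y ∈ X₁) ∨ (eta L x = -1 ∧ y ∈ X₂)) := by
    intro x y hx
    rw [hC₀, Set.mem_union, Set.mem_union, mem_main h2 hω _ _ hx, mem_main h2 hω _ _ hx,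
      mem_inf _ hx, pow_zero, pow_one, or_false]
  have M1 : ∀ x y : L, x ≠ 0 →
      ((x, x * y) ∈ C₁ ↔ (eta L x = 1 ∧ y ∈ X₃) ∨ (eta L x = -1 ∧ y ∈ X₄)) := by
    intro x y hx
    rw [hC₁, Set.mem_union, mem_main h2 hω _ _ hx, mem_main h2 hω _ _ hx, pow_zero, pow_one]
  have M2 : ∀ x y : L, x ≠ 0 →
      ((x, x * y) ∈ C₂ ↔ (eta L x = 1 ∧ y ∈ X₂) ∨ (eta L x = -1 ∧ y ∈ X₁)) := by
    intro x y hx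
    rw [hC₂, Set.mem_union, Set.mem_union, mem_main h2 hω _ _ hx, mem_main h2 hω _ _ hx,
      mem_inf _ hx, pow_zero, pow_one, or_false, or_comm]
  have M3 : ∀ x y : L, x ≠ 0 →
      ((x, x * y) ∈ C₃ ↔ (eta L x = 1 ∧ y ∈ X₄) ∨ (eta L x = -1 ∧ y ∈ X₃)) := by
    intro x y hx
    rw [hC₃, Set.mem_union, mem_main h2 hω _ _ hx, mem_main h2 hω _ _ hx, pow_zero, pow_one,
      or_comm]
  have Z0 : ∀ z : L, ((0 : L), z) ∈ C₀ ↔ z ≠ 0 ∧ eta L z = (-1) ^ τ := by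
    intro z
    rw [hC₀, Set.mem_union, Set.mem_union, mem_main0 h2 hω, mem_main0 h2 hω, mem_inf0 h2 hω,
      or_false, false_or]
  have Z1 : ∀ z : L, ((0 : L), z) ∈ C₁ ↔ False := by
    intro z
    rw [hC₁, Set.mem_union, mem_main0 h2 hω, mem_main0 h2 hω, or_false]
  have Z2 : ∀ z : L, ((0 : L), z) ∈ C₂ ↔ z ≠ 0 ∧ eta L z = -(-1) ^ τ := by
    intro z
    rw [hC₂, Set.mem_union, Set.mem_union, mem_main0 h2 hω, mem_main0 h2 hω, mem_inf0 h2 hω,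
      or_false, false_or, pow_succ, mul_neg_one]
  have Z3 : ∀ z : L, ((0 : L), z) ∈ C₃ ↔ False := by
    intro z
    rw [hC₃, Set.mem_union, mem_main0 h2 hω, mem_main0 h2 hω, or_false]
  have hτ1 : (-1 : ℂ) ^ τ = 1 ∨ (-1 : ℂ) ^ τ = -1 := neg_one_pow_eq_or ℂ τ
  have hτ2 : -(-1 : ℂ) ^ τ = 1 ∨ -(-1 : ℂ) ^ τ = -1 := by
    rcases hτ1 with h | h <;> rw [h] <;> norm_num
  have hone : (1 : ℂ) ≠ -1 := by norm_num
  have dis : ∀ E F : Set (L × L), (∀ x y : L, x ≠ 0 → (x, x * y) ∈ E → (x, x * y) ∉ F) →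
      (∀ z : L, ((0 : L), z) ∈ E → ((0 : L), z) ∉ F) → Disjoint E F := by
    intro E F h1 h0
    rw [Set.disjoint_left]
    intro w
    exact prod_cases (p := fun w => w ∈ E → w ∉ F) h1 h0 w
  have part : ∀ y : L, (y ∈ X₁ ↔ y ∈ X ∧ y ∉ X') ∧ (y ∈ X₂ ↔ y ∉ X ∧ y ∈ X') ∧
      (y ∈ X₃ ↔ y ∈ X ∧ y ∈ X') ∧ (y ∈ X₄ ↔ y ∉ X ∧ y ∉ X') := by
    intro y
    by_cases hA : y ∈ X <;> by_cases hB : y ∈ X' <;> simp [hX₄, hX₁, hX₂, hX₃, hA, hB]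
  have inU : ∀ (x y : L) (S : Set L), x ≠ 0 → ((x, x * y) ∈ ⋃ y ∈ S, Ky y ↔ y ∈ S) := by
    intro x y S hx
    simp only [Set.mem_iUnion, hKy]
    constructor
    · rintro ⟨y', hy', x', h⟩
      simp only [Prod.mk.injEq] at h
      obtain ⟨rfl, h⟩ := h
      rwa [mul_left_cancel₀ hx h]
    · intro h; exact ⟨y, h, x, rfl⟩
  have dich : ∀ x : L, x ≠ 0 → eta L x = 1 ∨ eta L x = -1 := fun x hx => eta_dich hx
  refine ⟨⟨?_, ?_, ?_, ?_⟩, ⟨?_, ?_, ?_, ?_, ?_, ?_⟩, ?_, ?_⟩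
  · refine typeQ_of hqm hψ (value_even hm hK' hL' h2 h2K h0 hew hφ C₀ 1 (Or.inl rfl) ?_ ?_)
    · intro x y hx
      rw [ind_main M0 x y hx, i1, i2]; ring
    · intro z
      rw [ind_inf hτ1 Z0, hτs]; simp only [neg_mul, one_mul]
  · refine typeQ_of hqm hψ (value_odd hm hK' hL' h2 h2K h0 hew hφ C₁ 1 (Or.inl rfl) ?_ ?_)
    · intro x y hx
      rw [ind_main M1 x y hx, i3, i4]; ring
    · intro z
      exact ind_not (by rw [Z1]; exact id)
  · refine typeQ_of hqm hψ (value_even hm hK' hL' h2 h2K h0 hew hφ C₂ (-1) (Or.inr rfl) ?_ ?_)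
    · intro x y hx
      rw [ind_main M2 x y hx, i1, i2]; ring
    · intro z
      rw [ind_inf hτ2 Z2, hτs]; simp only [neg_neg, one_mul]
  · refine typeQ_of hqm hψ (value_odd hm hK' hL' h2 h2K h0 hew hφ C₃ (-1) (Or.inr rfl) ?_ ?_)
    · intro x y hx
      rw [ind_main M3 x y hx, i3, i4]; ring
    · intro z
      exact ind_not (by rw [Z3]; exact id)
  · refine dis _ _ (fun x y hx => ?_) (fun z => ?_)
    · rw [M0 x y hx, M1 x y hx]
      obtain ⟨p1, p2, p3, p4⟩ := part y
      grind
    · rw [Z1]; simp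
  · refine dis _ _ (fun x y hx => ?_) (fun z => ?_)
    · rw [M0 x y hx, M2 x y hx]
      obtain ⟨p1, p2, p3, p4⟩ := part y
      grind
    · rw [Z0, Z2]
      rintro ⟨-, h⟩ ⟨-, h'⟩
      rw [h] at h'
      rcases hτ1 with h | h <;> rw [h] at h' <;> norm_num at h'
  · refine dis _ _ (fun x y hx => ?_) (fun z => ?_)
    · rw [M0 x y hx, M3 x y hx]
      obtain ⟨p1, p2, p3, p4⟩ := part y
      grind
    · rw [Z3]; simp
  · refine dis _ _ (fun x y hx => ?_) (fun z => ?_)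
    · rw [M1 x y hx, M2 x y hx]
      obtain ⟨p1, p2, p3, p4⟩ := part y
      grind
    · rw [Z1]; simp
  · refine dis _ _ (fun x y hx => ?_) (fun z => ?_)
    · rw [M1 x y hx, M3 x y hx]
      obtain ⟨p1, p2, p3, p4⟩ := part y
      grind
    · rw [Z1]; simp
  · refine dis _ _ (fun x y hx => ?_) (fun z => ?_)
    · rw [M2 x y hx, M3 x y hx]
      obtain ⟨p1, p2, p3, p4⟩ := part y
      grind
    · rw [Z3]; simp
  · ext w
    refine prod_cases (p := fun w => w ∈ C₀ ∪ C₂ ∪ {((0 : L), (0 : L))} ↔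
      w ∈ (⋃ y ∈ X₁ ∪ X₂, Ky y) ∪ Kinf) (fun x y hx => ?_) (fun z => ?_) w
    · rw [Set.mem_union, Set.mem_union, Set.mem_union, M0 x y hx, M2 x y hx, inU x y _ hx, hKinf]
      have e1 : (x, x * y) ∉ ({((0 : L), (0 : L))} : Set (L × L)) := by simp [hx]
      have e2 : (x, x * y) ∉ {w : L × L | ∃ x : L, w = ((0 : L), x)} := by simp [hx]
      have := dich x hx
      simp only [e1, e2, or_false, Set.mem_union]
      exact bool_aux this
    · have r : ((0 : L), z) ∈ (⋃ y ∈ X₁ ∪ X₂, Ky y) ∪ Kinf := by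
        right; rw [hKinf]; exact ⟨z, rfl⟩
      refine iff_of_true ?_ r
      rw [Set.mem_union, Set.mem_union, Z0, Z2]
      by_cases hz : z = 0
      · right; simp [hz]
      · left
        rcases hτ1 with h | h <;> rcases dich z hz with h' | h' <;> rw [h, h'] <;> simp [hz]
  · ext w
    refine prod_cases (p := fun w => w ∈ C₁ ∪ C₃ ∪ {((0 : L), (0 : L))} ↔
      w ∈ ⋃ y ∈ X₃ ∪ X₄, Ky y) (fun x y hx => ?_) (fun z => ?_) w
    · rw [Set.mem_union, Set.mem_union, M1 x y hx, M3 x y hx, inU x y _ hx]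
      have e1 : (x, x * y) ∉ ({((0 : L), (0 : L))} : Set (L × L)) := by simp [hx]
      have := dich x hx
      simp only [e1, or_false, Set.mem_union]
      exact bool_aux this
    · rw [Set.mem_union, Set.mem_union, Z1, Z3]
      simp only [false_or, Set.mem_iUnion, hKy, Set.mem_singleton_iff, Prod.mk.injEq, true_and]
      constructor
      · rintro rfl
        by_cases hne : (0 : L) ∈ X₃ ∪ X₄
        · exact ⟨0, hne, 0, by simp⟩
        · exfalso
          have hnX : (0 : L) ∉ X := by
            rw [hX]
            rintro ⟨u, hu, h⟩
            rw [map_zero] at h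
            exact hu (pow_eq_zero_iff (two_ne_zero) |>.1 h.symm)
          have hnX' : (0 : L) ∉ X' := by
            rw [hX']
            rintro ⟨x, ⟨u, hu, h⟩, hx⟩
            have : x = 0 := by
              rcases mul_eq_zero.1 hx.symm with h | h
              · exact h
              · exact absurd h h0
            rw [this, map_zero] at h
            exact hu (pow_eq_zero_iff (two_ne_zero) |>.1 h.symm)
          exact hne (Or.inr ((part 0).2.2.2.2 ⟨hnX, hnX'⟩))
      · rintro ⟨y, -, x, rfl, rfl⟩
        exact zero_mul y

end
end
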